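/- In the lemniscatic case k = 1/√2, for every n ∈ ℕ there exist integers a and b with I_{2n}^+ = a and a ≡ 2^n (mod 10), and I_{2n}^− = b and b ≡ 6·2^n (mod 10). -/

import Mathlib

/-!
The moments are Taylor coefficients of elliptic functions with square period lattice.

Put `K = K' = K(1/√2)` and let `φ = sn dn / cn`, which satisfies `φ'² = 1 + φ⁴`, `φ'' = 2φ³`,
`φ(0) = 0`, `φ'(0) = 1` and tends to infinity at `K`. It is shown that
`I_{2n}^+ = φ^{(4n+1)}(0)` (`Iplus_eq`) and `I_{2n}^- = -2 (φ²)^{(4n+2)}(0)` (`Iminus_eq`). By the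
differential equations the second derivative of `q(φ)` is `(T q)(φ)` with
`T q = (1 + X⁴) q'' + 2X³ q'`, so both are integers, namely a coefficient of an iterate of `T`. Modulo
`10` the operator `T²` preserves small spaces of polynomials: `X ↦ 2X + 4X⁵`, `X⁵ ↦ 0` and
`X² ↦ 2X²`. This yields the two congruences (`coeff_one_lemT`, `coeff_zero_lemT`).

For the analytic part, the substitution `x = (t/K)²` turns the integrals into
`∫₀^∞ t^(r-1) / (cosh t - ε cos t) dt` with `ε = ±1` and `ε = i^r`. Expanding the kernel as a double
geometric series gives the sum of `ε^(a+b) (1 + a(1+i) + b(1-i))^(-r)` over `a, b ≥ 0`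
(`moment_eq`). Multiplication by `i` permutes four such quadrants, so this is a quarter of a sum over
all of `ℤ²` (`four_mul_gQ`), hence a Taylor coefficient at `0` of `℘(x - 1) + ε ℘(x - i)` for the
lattice `2ℤ[i]`. On the real line, uniqueness for `f'' = 6f² - g₂/2` and a comparison of poles show
`℘(x - 1) + ℘(x - i) = K² φ(Kx)²` and `℘(x - 1) - ℘(x - i) = K² φ'(Kx)` (`wA_add_wB`, `wA_sub_wB`).

For `I_0^+` one has `r = 2` and the double sum is not absolutely convergent. There the generating
function `∫₀^∞ t (cosh tx + cos tx) / (cosh t + cos t) dt` of the moments agrees with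
`℘(x - 1) - ℘(x - i)` up to a constant (`genH_eq`), and both are `1/(1-x)² + o(1)` as `x` increases
to `1`, so the constant is `0` (`two_mul_moment_neg_one_one`).
-/

open MeasureTheory Real

/-- The complete elliptic integral of the first kind `K(k)`. -/
noncomputable def ellipticK (k : ℝ) : ℝ :=
  ∫ θ in (0 : ℝ)..(π / 2), (1 - k ^ 2 * Real.sin θ ^ 2) ^ (-(1 / 2) : ℝ)

/-- Kuznetsov's moment integral `I_n^+`, realizing
`(1/2)∫_ℝ x^n dx/(cos(√x K) + cosh(√x K'))` with `√x = i√(−x)` for `x < 0`. -/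
noncomputable def Iplus (k : ℝ) (n : ℕ) : ℝ :=
  (1 / 2) * (∫ x in Set.Ioi (0 : ℝ), x ^ n /
      (Real.cos (ellipticK k * Real.sqrt x) +
        Real.cosh (ellipticK (Real.sqrt (1 - k ^ 2)) * Real.sqrt x)))
  + ((-1 : ℝ) ^ n / 2) * (∫ x in Set.Ioi (0 : ℝ), x ^ n /
      (Real.cosh (ellipticK k * Real.sqrt x) +
        Real.cos (ellipticK (Real.sqrt (1 - k ^ 2)) * Real.sqrt x)))

/-- Kuznetsov's moment integral `I_n^−`, realizing
`∫_ℝ x^{n+1} dx/(cos(√x K) − cosh(√x K'))` with `√x = i√(−x)` for `x < 0`. -/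
noncomputable def Iminus (k : ℝ) (n : ℕ) : ℝ :=
  (∫ x in Set.Ioi (0 : ℝ), x ^ (n + 1) /
      (Real.cos (ellipticK k * Real.sqrt x) -
        Real.cosh (ellipticK (Real.sqrt (1 - k ^ 2)) * Real.sqrt x)))
  + (-1 : ℝ) ^ (n + 1) * (∫ x in Set.Ioi (0 : ℝ), x ^ (n + 1) /
      (Real.cosh (ellipticK k * Real.sqrt x) -
        Real.cos (ellipticK (Real.sqrt (1 - k ^ 2)) * Real.sqrt x)))

/-! ### The operator `D²` on polynomials in the lemniscatic function -/

open Polynomial in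
/-- The operator `q ↦ (1 + X⁴) q'' + 2 X³ q'`. If `y'' = 2 y³` and `y'² = 1 + y⁴`, then
`(q(y))'' = (lemT q)(y)`. -/
noncomputable def lemT (q : ℤ[X]) : ℤ[X] :=
  (1 + X ^ 4) * derivative (derivative q) + 2 * X ^ 3 * derivative q

open Polynomial in
lemma lemT_add (p q : ℤ[X]) : lemT (p + q) = lemT p + lemT q := by
  simp only [lemT, derivative_add]; ring

open Polynomial in
lemma lemT_C_mul (c : ℤ) (q : ℤ[X]) : lemT (C c * q) = C c * lemT q := by
  simp only [lemT, derivative_C_mul]; ring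

open Polynomial in
lemma lemT_X : lemT X = 2 * X ^ 3 := by simp [lemT]

open Polynomial in
lemma lemT_X_pow (k : ℕ) :
    lemT (X ^ (k + 2)) = C ((k + 2) * (k + 1) : ℤ) * (X ^ k + X ^ (k + 4))
      + C (2 * (k + 2) : ℤ) * X ^ (k + 4) := by
  simp only [lemT, derivative_X_pow, derivative_mul]
  simp
  ring

open Polynomial in
/-- Modulo `10` the square of `lemT` acts on `X` as `X ↦ 2X + 4X⁵` and kills `X⁵`. -/
lemma lemT_iter_X (N : ℕ) : ∃ (s : ℤ) (r : ℤ[X]),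
    lemT^[2 * N] X = C (2 ^ N) * X + C s * X ^ 5 + C 10 * r := by
  induction N with
  | zero => exact ⟨0, 0, by simp⟩
  | succ N ih =>
    obtain ⟨s, r, h⟩ := ih
    have h2 : lemT (2 * X ^ 3) = C 12 * X + C 24 * X ^ 5 := by
      have := lemT_X_pow 1
      rw [show (2 * X ^ 3 : ℤ[X]) = C 2 * X ^ (1 + 2) by simp, lemT_C_mul, this]
      simp; ring
    have h5 : lemT (X ^ 5) = C 10 * (2 * X ^ 3 + 3 * X ^ 7) := by
      have := lemT_X_pow 3
      rw [show (5 : ℕ) = 3 + 2 by rfl, this]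
      simp; ring
    refine ⟨2 ^ N * 24, C (2 ^ N) * X + C s * lemT (2 * X ^ 3 + 3 * X ^ 7) + lemT (lemT r), ?_⟩
    rw [show 2 * (N + 1) = 2 * N + 1 + 1 by ring, Function.iterate_succ_apply',
      Function.iterate_succ_apply', h]
    simp only [lemT_add, lemT_C_mul, lemT_X, h5, h2]
    simp; ring

open Polynomial in
lemma coeff_one_lemT (N : ℕ) : (lemT^[2 * N] X).coeff 1 ≡ 2 ^ N [ZMOD 10] := by
  obtain ⟨s, r, h⟩ := lemT_iter_X N
  rw [h]
  generalize (2 : ℤ) ^ N = c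
  simp [coeff_X_pow, Int.ModEq, Int.add_mul_emod_self_left]

open Polynomial in
/-- Modulo `10` the square of `lemT` multiplies `X²` by `2`. -/
lemma lemT_iter_X_sq (N : ℕ) : ∃ (r : ℤ[X]),
    lemT^[2 * N] (X ^ 2) = C (2 ^ N) * X ^ 2 + C 10 * r := by
  induction N with
  | zero => exact ⟨0, by simp⟩
  | succ N ih =>
    obtain ⟨r, h⟩ := ih
    have h2 : lemT (lemT (X ^ 2)) = C 72 * X ^ 2 + C 120 * X ^ 6 := by
      have h0 := lemT_X_pow 0
      have h4 := lemT_X_pow 2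
      rw [show (2 : ℕ) = 0 + 2 by rfl, h0]
      have : (C ((((0:ℕ):ℤ) + 2) * (((0:ℕ):ℤ) + 1) : ℤ) * (X ^ 0 + X ^ (0 + 4))
        + C (2 * (((0:ℕ):ℤ) + 2) : ℤ) * X ^ (0 + 4) : ℤ[X]) = C 2 * 1 + C 6 * X ^ (2 + 2) := by
        simp; ring
      rw [this, lemT_add, lemT_C_mul, lemT_C_mul, h4]
      simp [lemT]; ring
    refine ⟨C (2 ^ N) * 7 * X ^ 2 + C (2 ^ N) * 12 * X ^ 6 + lemT (lemT r), ?_⟩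
    rw [show 2 * (N + 1) = 2 * N + 1 + 1 by ring, Function.iterate_succ_apply',
      Function.iterate_succ_apply', h]
    simp only [lemT_add, lemT_C_mul, h2]
    simp; ring

open Polynomial in
lemma coeff_zero_lemT (N : ℕ) :
    -2 * (lemT^[2 * N + 1] (X ^ 2)).coeff 0 ≡ 6 * 2 ^ N [ZMOD 10] := by
  obtain ⟨r, h⟩ := lemT_iter_X_sq N
  have h0 := lemT_X_pow 0
  rw [Function.iterate_succ_apply', h, lemT_add, lemT_C_mul, lemT_C_mul, h0]
  have e : ∀ c z : ℤ, -2 * (c * 2 + 10 * z) ≡ 6 * c [ZMOD 10] := fun c z =>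
    Int.modEq_iff_dvd.mpr ⟨c + 2 * z, by ring⟩
  generalize (2 : ℤ) ^ N = c
  simpa using e c ((lemT r).coeff 0)

/-! ### The lemniscatic function on the real line -/

open Set Filter Topology

/-- `dn` as a function of the amplitude, for the modulus `1/√2`. -/
noncomputable def lemW (θ : ℝ) : ℝ := √(1 - sin θ ^ 2 / 2)

lemma lemW_arg_pos (θ : ℝ) : 0 < 1 - sin θ ^ 2 / 2 := by
  have := sin_sq_le_one θ
  linarith

lemma lemW_pos (θ : ℝ) : 0 < lemW θ := sqrt_pos.mpr (lemW_arg_pos θ)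

lemma lemW_sq (θ : ℝ) : lemW θ ^ 2 = 1 - sin θ ^ 2 / 2 := sq_sqrt (lemW_arg_pos θ).le

lemma lemW_le_one (θ : ℝ) : lemW θ ≤ 1 := by
  have := lemW_sq θ
  have := lemW_pos θ
  nlinarith [sq_nonneg (sin θ)]

lemma hasDerivAt_lemW (θ : ℝ) : HasDerivAt lemW (-(sin θ * cos θ) / (2 * lemW θ)) θ := by
  have h : HasDerivAt (fun θ => 1 - sin θ ^ 2 / 2) (-(sin θ * cos θ)) θ := by
    have := (((hasDerivAt_sin θ).pow 2).div_const 2).const_sub 1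
    convert! this using 1
    simp; ring
  exact h.sqrt (lemW_arg_pos θ).ne'

lemma continuous_lemW : Continuous lemW :=
  continuous_iff_continuousAt.mpr fun θ => (hasDerivAt_lemW θ).continuousAt

/-- The incomplete elliptic integral of the first kind for the modulus `1/√2`. -/
noncomputable def lemF (θ : ℝ) : ℝ := ∫ t in (0 : ℝ)..θ, (lemW t)⁻¹

lemma continuous_lemW_inv : Continuous fun t => (lemW t)⁻¹ :=
  continuous_lemW.inv₀ fun t => (lemW_pos t).ne'

lemma hasDerivAt_lemF (θ : ℝ) : HasDerivAt lemF (lemW θ)⁻¹ θ :=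
  intervalIntegral.integral_hasDerivAt_right (continuous_lemW_inv.intervalIntegrable _ _)
    (continuous_lemW_inv.stronglyMeasurableAtFilter _ _) continuous_lemW_inv.continuousAt

lemma lemF_zero : lemF 0 = 0 := by simp [lemF]

lemma lemF_neg (θ : ℝ) : lemF (-θ) = -lemF θ := by
  have h := intervalIntegral.integral_comp_neg (a := 0) (b := θ) fun t => (lemW t)⁻¹
  have e : ∀ t, lemW (-t) = lemW t := fun t => by simp [lemW]
  simp only [e, neg_zero] at h
  rw [lemF, lemF, h, intervalIntegral.integral_symm]

lemma ellipticK_lem : ellipticK (1 / √2) = lemF (π / 2) := by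
  unfold ellipticK lemF
  congr 1
  ext t
  rw [div_pow, sq_sqrt (by norm_num : (0 : ℝ) ≤ 2), rpow_neg (by
    have := lemW_arg_pos t
    linarith), ← sqrt_eq_rpow, lemW]
  congr 3; ring

lemma ellipticK_compl : √(1 - (1 / √2) ^ 2) = 1 / √2 := by
  rw [div_pow, sq_sqrt (by norm_num : (0 : ℝ) ≤ 2)]
  norm_num

lemma strictMono_lemF : StrictMono lemF :=
  strictMono_of_hasDerivAt_pos hasDerivAt_lemF fun θ => inv_pos.mpr (lemW_pos θ)

lemma continuous_lemF : Continuous lemF :=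
  continuous_iff_continuousAt.mpr fun θ => (hasDerivAt_lemF θ).continuousAt

lemma le_lemF {θ : ℝ} (h : 0 ≤ θ) : θ ≤ lemF θ := by
  have : Monotone fun t => lemF t - t :=
    monotone_of_hasDerivAt_nonneg (fun t => (hasDerivAt_lemF t).sub (hasDerivAt_id t)) fun t => by
      have := (one_le_inv₀ (lemW_pos t)).mpr (lemW_le_one t)
      simpa using this
  have := this h
  simp only [lemF_zero] at this
  linarith

lemma surjective_lemF : Function.Surjective lemF := by
  have h1 : Tendsto lemF atTop atTop :=
    tendsto_atTop_mono' _ (by filter_upwards [eventually_ge_atTop 0] with t ht using le_lemF ht)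
      tendsto_id
  have h2 : Tendsto lemF atBot atBot := by
    have : lemF = fun t => -lemF (-t) := by ext t; rw [lemF_neg, neg_neg]
    rw [this]
    exact tendsto_neg_atTop_atBot.comp (h1.comp tendsto_neg_atBot_atTop)
  exact continuous_lemF.surjective h1 h2

/-- The Jacobi amplitude for the modulus `1/√2`. -/
noncomputable def lemAm : ℝ ≃o ℝ := (strictMono_lemF.orderIsoOfSurjective _ surjective_lemF).symm

lemma lemF_lemAm (u : ℝ) : lemF (lemAm u) = u :=
  (strictMono_lemF.orderIsoOfSurjective _ surjective_lemF).apply_symm_apply u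

lemma lemAm_lemF (u : ℝ) : lemAm (lemF u) = u :=
  (strictMono_lemF.orderIsoOfSurjective _ surjective_lemF).symm_apply_apply u

lemma hasDerivAt_lemAm (u : ℝ) : HasDerivAt lemAm (lemW (lemAm u)) u := by
  have := HasDerivAt.of_local_left_inverse (lemAm.continuous.continuousAt (x := u))
    (hasDerivAt_lemF (lemAm u)) (inv_ne_zero (lemW_pos _).ne') (.of_forall lemF_lemAm)
  simpa using this

/-- The lemniscatic function `sn · dn / cn`, the solution of `y' = √(1 + y⁴)`, `y(0) = 0`. -/
noncomputable def lemPhi (u : ℝ) : ℝ := sin (lemAm u) * lemW (lemAm u) / cos (lemAm u)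

/-- The derivative of `lemPhi`. -/
noncomputable def lemPhi' (u : ℝ) : ℝ :=
  (1 - sin (lemAm u) ^ 2 + sin (lemAm u) ^ 4 / 2) / cos (lemAm u) ^ 2

/-- The lemniscatic quarter period. -/
noncomputable abbrev lemK : ℝ := ellipticK (1 / √2)

lemma lemK_pos : 0 < lemK := by
  rw [lemK, ellipticK_lem]
  exact (by positivity : (0 : ℝ) < π / 2).trans_le (le_lemF (by positivity))

lemma lemAm_zero : lemAm 0 = 0 := by rw [← lemF_zero, lemAm_lemF, lemF_zero]

lemma lemAm_lemK : lemAm lemK = π / 2 := by rw [lemK, ellipticK_lem, lemAm_lemF]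

lemma lemPhi_zero : lemPhi 0 = 0 := by simp [lemPhi, lemAm_zero]

lemma lemPhi'_zero : lemPhi' 0 = 1 := by simp [lemPhi', lemAm_zero]

lemma cos_lemAm_pos {u : ℝ} (hu : u ∈ Ioo (-lemK) lemK) : 0 < cos (lemAm u) := by
  apply cos_pos_of_mem_Ioo
  constructor
  · have := lemAm.strictMono hu.1
    rwa [lemK, ellipticK_lem, ← lemF_neg, lemAm_lemF] at this
  · rw [← lemAm_lemK]
    exact lemAm.strictMono hu.2

lemma lemPhi'_sq {u : ℝ} (hu : u ∈ Ioo (-lemK) lemK) : lemPhi' u ^ 2 = 1 + lemPhi u ^ 4 := by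
  have hc := (cos_lemAm_pos hu).ne'
  have hcs := sin_sq_add_cos_sq (lemAm u)
  have hw := lemW_sq (lemAm u)
  simp only [lemPhi, lemPhi']
  rw [div_pow, div_pow, mul_pow, show lemW (lemAm u) ^ 4 = (lemW (lemAm u) ^ 2) ^ 2 by ring, hw]
  field_simp
  have : cos (lemAm u) ^ 2 = 1 - sin (lemAm u) ^ 2 := by linarith
  rw [show cos (lemAm u) ^ 4 = (cos (lemAm u) ^ 2) ^ 2 by ring, this]
  ring

lemma hasDerivAt_lemPhi {u : ℝ} (hu : u ∈ Ioo (-lemK) lemK) :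
    HasDerivAt lemPhi (lemPhi' u) u := by
  have hc := (cos_lemAm_pos hu).ne'
  have hcs := sin_sq_add_cos_sq (lemAm u)
  have hw := lemW_sq (lemAm u)
  have hwp := (lemW_pos (lemAm u)).ne'
  have h := ((((hasDerivAt_sin (lemAm u)).mul (hasDerivAt_lemW (lemAm u))).div
    (hasDerivAt_cos (lemAm u)) hc)).comp u (hasDerivAt_lemAm u)
  convert! h using 1
  simp only [lemPhi', Pi.mul_apply]
  generalize lemW (lemAm u) = w at *
  generalize sin (lemAm u) = s at *
  generalize cos (lemAm u) = c at *
  field_simp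
  have : c ^ 2 = 1 - s ^ 2 := by linarith
  rw [hw, this]
  ring

lemma hasDerivAt_lemPhi' {u : ℝ} (hu : u ∈ Ioo (-lemK) lemK) :
    HasDerivAt lemPhi' (2 * lemPhi u ^ 3) u := by
  have hc := (cos_lemAm_pos hu).ne'
  have hcs := sin_sq_add_cos_sq (lemAm u)
  have hw := lemW_sq (lemAm u)
  have hs := hasDerivAt_sin (lemAm u)
  have h := ((((hs.pow 2).const_sub 1).add ((hs.pow 4).div_const 2)).div
    ((hasDerivAt_cos (lemAm u)).pow 2) (pow_ne_zero 2 hc)).comp u (hasDerivAt_lemAm u)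
  convert! h using 1
  simp only [lemPhi, Pi.add_apply, Pi.pow_apply]
  generalize lemW (lemAm u) = w at *
  generalize sin (lemAm u) = s at *
  generalize cos (lemAm u) = c at *
  have h2 : c ^ 2 = 1 - s ^ 2 := by linarith
  rw [div_pow, mul_pow, show w ^ 3 = w ^ 2 * w by ring, hw]
  field_simp
  simp only [Nat.cast_ofNat]
  have h3 : c ^ 3 = (1 - s ^ 2) * c := by rw [← h2]; ring
  ring_nf
  rw [h3]
  ring

lemma lemPhi'_pos {u : ℝ} (hu : u ∈ Ioo (-lemK) lemK) : 0 < lemPhi' u := by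
  have hc := cos_lemAm_pos hu
  have : 0 < 1 - sin (lemAm u) ^ 2 + sin (lemAm u) ^ 4 / 2 := by
    have := sq_nonneg (sin (lemAm u) ^ 2 - 1)
    nlinarith
  exact div_pos this (by positivity)

lemma tendsto_lemPhi : Tendsto lemPhi (𝓝[<] lemK) atTop := by
  have ham : Tendsto lemAm (𝓝[<] lemK) (𝓝 (π / 2)) := by
    rw [← lemAm_lemK]
    exact (lemAm.continuous.tendsto _).mono_left nhdsWithin_le_nhds
  have h1 : Tendsto (fun u => sin (lemAm u) * lemW (lemAm u)) (𝓝[<] lemK)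
      (𝓝 (sin (π / 2) * lemW (π / 2))) :=
    ((continuous_sin.tendsto _).comp ham).mul ((continuous_lemW.tendsto _).comp ham)
  have h2 : Tendsto (fun u => (cos (lemAm u))⁻¹) (𝓝[<] lemK) atTop := by
    refine tendsto_inv_nhdsGT_zero.comp (tendsto_nhdsWithin_iff.mpr ⟨?_, ?_⟩)
    · rw [← cos_pi_div_two]
      exact (continuous_cos.tendsto _).comp ham
    · have : Ioo (-lemK) lemK ∈ 𝓝[<] lemK := Ioo_mem_nhdsLT (by linarith [lemK_pos])
      filter_upwards [this] with u hu using cos_lemAm_pos hu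
  exact h1.pos_mul_atTop (by simpa using lemW_pos _) h2

/-! ### The Weierstrass function of the square lattice `2ℤ[i]` -/

open Complex (I)

lemma sqL_indep : LinearIndependent ℝ ![(2 : ℂ), 2 * I] := by
  rw [LinearIndependent.pair_iff]
  intro s t h
  have h1 := congrArg Complex.re h
  have h2 := congrArg Complex.im h
  simp at h1 h2
  exact ⟨h1, h2⟩

/-- The square lattice `2ℤ[i]`. -/
noncomputable def sqL : PeriodPair := ⟨2, 2 * I, sqL_indep⟩

lemma mem_sqL {z : ℂ} : z ∈ sqL.lattice ↔ ∃ a b : ℤ, z = 2 * a + 2 * b * I := by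
  rw [PeriodPair.mem_lattice]
  refine exists_congr fun a => exists_congr fun b => ?_
  simp only [sqL]
  constructor
  · rintro rfl; ring
  · rintro rfl; ring

/-- `℘` for the lattice `2ℤ[i]`. -/
noncomputable abbrev wP : ℂ → ℂ := sqL.weierstrassP

/-- `℘'` for the lattice `2ℤ[i]`. -/
noncomputable abbrev wP' : ℂ → ℂ := sqL.derivWeierstrassP

lemma I_mul_mem {z : ℂ} (h : z ∈ sqL.lattice) : I * z ∈ sqL.lattice := by
  obtain ⟨a, b, rfl⟩ := mem_sqL.mp h
  refine mem_sqL.mpr ⟨-b, a, ?_⟩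
  push_cast
  linear_combination 2 * b * Complex.I_sq

lemma conj_mem {z : ℂ} (h : z ∈ sqL.lattice) : (starRingEnd ℂ) z ∈ sqL.lattice := by
  obtain ⟨a, b, rfl⟩ := mem_sqL.mp h
  refine mem_sqL.mpr ⟨a, -b, ?_⟩
  simp [Complex.conj_ofNat]

/-- Multiplication by `i` on the lattice. -/
noncomputable def rotL : sqL.lattice ≃ sqL.lattice where
  toFun l := ⟨I * l, I_mul_mem l.2⟩
  invFun l := ⟨-(I * l), neg_mem (I_mul_mem l.2)⟩
  left_inv l := by ext; simp [← mul_assoc]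
  right_inv l := by ext; simp [← mul_assoc]

/-- Complex conjugation on the lattice. -/
noncomputable def conjL : sqL.lattice ≃ sqL.lattice where
  toFun l := ⟨(starRingEnd ℂ) l, conj_mem l.2⟩
  invFun l := ⟨(starRingEnd ℂ) l, conj_mem l.2⟩
  left_inv l := by ext; simp
  right_inv l := by ext; simp

lemma wP_I_mul (z : ℂ) : wP (I * z) = -wP z := by
  simp only [wP, PeriodPair.weierstrassP]
  rw [← rotL.tsum_eq, ← tsum_neg]
  refine tsum_congr fun l => ?_
  simp only [rotL, Equiv.coe_fn_mk]
  rw [← mul_sub, mul_pow, mul_pow, Complex.I_sq, neg_one_mul, neg_one_mul, div_neg, div_neg]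
  ring

lemma wP_conj (z : ℂ) : wP ((starRingEnd ℂ) z) = (starRingEnd ℂ) (wP z) := by
  simp only [wP, PeriodPair.weierstrassP]
  rw [← conjL.tsum_eq, Complex.conj_tsum]
  refine tsum_congr fun l => ?_
  simp [conjL]

lemma sumInvPow_I_mul (x : ℂ) (r : ℕ) :
    sqL.sumInvPow (I * x) r = (I ^ r)⁻¹ * sqL.sumInvPow x r := by
  simp only [PeriodPair.sumInvPow]
  rw [← rotL.tsum_eq, ← tsum_mul_left]
  refine tsum_congr fun l => ?_
  simp only [rotL, Equiv.coe_fn_mk]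
  rw [← mul_sub, mul_pow, mul_inv]

lemma sumInvPow_add (x : ℂ) (r : ℕ) (l : sqL.lattice) :
    sqL.sumInvPow (x + l) r = sqL.sumInvPow x r := by
  simp only [PeriodPair.sumInvPow]
  rw [← (Equiv.addRight l).tsum_eq]
  refine tsum_congr fun l => ?_
  simp

lemma sqL_g₃ : sqL.g₃ = 0 := by
  have h := sumInvPow_I_mul 0 6
  rw [mul_zero, PeriodPair.sumInvPow_zero, show I ^ 6 = -1 by
    rw [show 6 = 2 * 3 by rfl, pow_mul, Complex.I_sq]; norm_num] at h
  have : sqL.G 6 = 0 := by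
    have h2 : (2 : ℂ) * sqL.G 6 = 0 := by linear_combination h
    simpa using h2
  simp [PeriodPair.g₃, this]

lemma two_mem : (2 : ℂ) ∈ sqL.lattice := mem_sqL.mpr ⟨1, 0, by simp⟩

lemma two_I_mem : 2 * I ∈ sqL.lattice := mem_sqL.mpr ⟨0, 1, by simp⟩

lemma wP'_sq {z : ℂ} (hz : z ∉ sqL.lattice) :
    wP' z ^ 2 = 4 * wP z ^ 3 - sqL.g₂ * wP z := by
  rw [wP', sqL.derivWeierstrassP_sq z hz, sqL_g₃, sub_zero]

lemma isOpen_compl_sqL : IsOpen (sqL.lattice : Set ℂ)ᶜ := sqL.isClosed_lattice.isOpen_compl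

lemma hasDerivAt_wP {z : ℂ} (hz : z ∉ sqL.lattice) : HasDerivAt wP (wP' z) z := by
  have := (sqL.differentiableOn_weierstrassP.differentiableAt
    (isOpen_compl_sqL.mem_nhds hz)).hasDerivAt
  rwa [sqL.deriv_weierstrassP] at this

lemma tendsto_wP_sub : Tendsto (fun z => wP z - 1 / z ^ 2) (𝓝 0) (𝓝 0) := by
  have h := (sqL.analyticAt_weierstrassPExcept 0).continuousAt.tendsto
  rw [sqL.weierstrassPExcept_zero] at h
  refine h.congr fun z => ?_
  have := sqL.weierstrassPExcept_def 0 z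
  simp only [ZeroMemClass.coe_zero] at this
  rw [this]
  simp [sub_eq_add_neg]

lemma real_tendsto_pole : Tendsto (fun x : ℝ => wP (x - 1) - 1 / (x - 1 : ℂ) ^ 2) (𝓝[<] 1) (𝓝 0) := by
  have : Tendsto (fun x : ℝ => (x : ℂ) - 1) (𝓝[<] 1) (𝓝 0) := by
    have h : Continuous fun x : ℝ => (x : ℂ) - 1 := by fun_prop
    have := h.tendsto 1
    simp only [Complex.ofReal_one, sub_self] at this
    exact this.mono_left nhdsWithin_le_nhds
  exact tendsto_wP_sub.comp this

lemma norm_wP_tendsto : Tendsto (fun x : ℝ => ‖wP (x - 1)‖) (𝓝[<] 1) atTop := by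
  have h1 : Tendsto (fun x : ℝ => ‖1 / (x - 1 : ℂ) ^ 2‖) (𝓝[<] 1) atTop := by
    have e : (fun x : ℝ => ‖1 / (x - 1 : ℂ) ^ 2‖) = fun x : ℝ => ((1 - x) ^ 2)⁻¹ := by
      ext x
      rw [show (1 / (x - 1 : ℂ) ^ 2) = (((1 - x) ^ 2)⁻¹ : ℝ) by push_cast; rw [one_div]; congr 1; ring,
        Complex.norm_real, norm_of_nonneg (by positivity)]
    rw [e]
    refine tendsto_inv_nhdsGT_zero.comp (tendsto_nhdsWithin_iff.mpr ⟨?_, ?_⟩)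
    · have h : Continuous fun x : ℝ => (1 - x) ^ 2 := by fun_prop
      have := h.tendsto 1
      simp only [sub_self, ne_eq, OfNat.ofNat_ne_zero, not_false_eq_true, zero_pow] at this
      exact this.mono_left nhdsWithin_le_nhds
    · filter_upwards [self_mem_nhdsWithin] with x hx
      have : 0 < 1 - x := sub_pos.mpr hx
      exact pow_pos this 2
  have h2 := real_tendsto_pole.norm
  have h3 := h1.atTop_add (h2.const_mul (-1))
  refine tendsto_atTop_mono (fun x => ?_) h3
  have := norm_sub_norm_le (1 / (x - 1 : ℂ) ^ 2) (wP (x - 1))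
  have e := norm_sub_rev (1 / (x - 1 : ℂ) ^ 2) (wP (x - 1))
  linarith

lemma real_sub_one_notMem {x : ℝ} (hx : x ∈ Ioo (-1 : ℝ) 1) : (x - 1 : ℂ) ∉ sqL.lattice := by
  intro h
  obtain ⟨a, b, hab⟩ := mem_sqL.mp h
  have := congrArg Complex.re hab
  simp at this
  have h1 : (a : ℝ) < 0 := by linarith [hx.2]
  have h2 : (-1 : ℝ) < a := by linarith [hx.1]
  have h1' : a < 0 := by exact_mod_cast h1
  have h2' : -1 < a := by exact_mod_cast h2
  omega

lemma real_sub_I_notMem (x : ℝ) : (x - I : ℂ) ∉ sqL.lattice := by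
  intro h
  obtain ⟨a, b, hab⟩ := mem_sqL.mp h
  have := congrArg Complex.im hab
  simp at this
  have h2 : (2 * b + 1 : ℝ) = 0 := by linarith
  have h3 : 2 * b + 1 = 0 := by exact_mod_cast h2
  omega

/-- `℘'' = 6℘² - g₂/2`. Differentiating `℘'² = 4℘³ - g₂℘` gives this after multiplication by `℘'`;
the factor is removed by the identity theorem, as `℘'` does not vanish identically. -/
lemma hasDerivAt_wP' {z : ℂ} (hz : z ∉ sqL.lattice) :
    HasDerivAt wP' (6 * wP z ^ 2 - sqL.g₂ / 2) z := by
  have hana : AnalyticOnNhd ℂ wP' (sqL.lattice : Set ℂ)ᶜ := sqL.analyticOnNhd_derivWeierstrassP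
  have hanaP : AnalyticOnNhd ℂ wP (sqL.lattice : Set ℂ)ᶜ := sqL.analyticOnNhd_weierstrassP
  have hconn : IsPreconnected (sqL.lattice : Set ℂ)ᶜ := by
    refine (Set.Countable.isPathConnected_compl_of_one_lt_rank (by simp)
      ?_).isConnected.isPreconnected
    have : Countable sqL.lattice := sqL.latticeEquivProd.toEquiv.countable_iff.mpr inferInstance
    exact Set.countable_coe_iff.mp this
  have hd : AnalyticOnNhd ℂ (fun z => deriv wP' z - (6 * wP z ^ 2 - sqL.g₂ / 2))
      (sqL.lattice : Set ℂ)ᶜ := by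
    intro w hw
    have h1 := (hana w hw).deriv
    have h2 := hanaP w hw
    fun_prop
  have hmul : ∀ w ∈ (sqL.lattice : Set ℂ)ᶜ,
      wP' w * (deriv wP' w - (6 * wP w ^ 2 - sqL.g₂ / 2)) = 0 := by
    intro w hw
    have h1 := ((hana w hw).differentiableAt.hasDerivAt).pow 2
    have h2 := ((hasDerivAt_wP hw).pow 3).const_mul 4 |>.sub
      ((hasDerivAt_wP hw).const_mul sqL.g₂)
    have h3 : (wP' ^ 2) =ᶠ[𝓝 w] fun z => 4 * wP z ^ 3 - sqL.g₂ * wP z := by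
      filter_upwards [isOpen_compl_sqL.mem_nhds hw] with v hv
      exact wP'_sq hv
    have h4 := (h2.congr_of_eventuallyEq h3).unique h1
    simp only [Nat.cast_ofNat] at h4
    linear_combination (-1 / 2) * h4
  rcases AnalyticOnNhd.eq_zero_or_eq_zero_of_mul_eq_zero hana hd hmul hconn with h | h
  · exfalso
    -- If `℘' = 0` then `℘` is constant on `(0, 1)`, contradicting the pole at the lattice point.
    have hc : ∀ x ∈ Ioo (0 : ℝ) 1, wP (x - 1) = wP ((1 / 2 : ℝ) - 1) := by
      intro x hx
      have hder : ∀ y ∈ Ioo (0 : ℝ) 1, HasDerivAt (fun y : ℝ => wP (y - 1)) 0 y := by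
        intro y hy
        have hm := real_sub_one_notMem (x := y) ⟨by linarith [hy.1], hy.2⟩
        have := (hasDerivAt_wP hm).comp_sub_const (y : ℂ) 1
        rw [h _ hm] at this
        exact this.comp_ofReal
      exact (convex_Ioo (0 : ℝ) 1).is_const_of_fderivWithin_eq_zero (𝕜 := ℝ)
        (f := fun y : ℝ => wP (y - 1))
        (fun y hy => (hder y hy).differentiableAt.differentiableWithinAt) (fun y hy => by
          rw [fderivWithin_of_isOpen isOpen_Ioo hy]
          have := (hder y hy).hasFDerivAt.fderiv
          rw [this]; ext; simp) hx ⟨by norm_num, by norm_num⟩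
    have hev : ∀ᶠ x : ℝ in 𝓝[<] (1 : ℝ), ‖wP (x - 1)‖ ≤ ‖wP ((1 / 2 : ℝ) - 1)‖ := by
      filter_upwards [Ioo_mem_nhdsLT (show (0 : ℝ) < 1 by norm_num)] with x hx
      rw [hc x hx]
    obtain ⟨x, hx1, hx2⟩ := (hev.and (norm_wP_tendsto.eventually_gt_atTop _)).exists
    exact absurd hx1 (not_le.mpr hx2)
  · have h1 := (hana z hz).differentiableAt.hasDerivAt
    rwa [sub_eq_zero.mp (h z hz)] at h1

/-! ### Identification of `℘` on the real line with the lemniscatic function -/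

/-- Uniqueness, to the right of the initial point, for the equation `y'' = 6y² - c`. -/
lemma wp_ode_unique_right {f f₁ g g₁ : ℝ → ℂ} {b : ℝ} {c : ℂ}
    (hf : ∀ x ∈ Icc 0 b, HasDerivAt f (f₁ x) x) (hf₁ : ∀ x ∈ Icc 0 b, HasDerivAt f₁ (6 * f x ^ 2 - c) x)
    (hg : ∀ x ∈ Icc 0 b, HasDerivAt g (g₁ x) x) (hg₁ : ∀ x ∈ Icc 0 b, HasDerivAt g₁ (6 * g x ^ 2 - c) x)
    (h0 : f 0 = g 0) (h1 : f₁ 0 = g₁ 0) : ∀ x ∈ Icc 0 b, f x = g x := by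
  have hcont : ContinuousOn (fun x => f x + g x) (Icc 0 b) := fun x hx =>
    ((hf x hx).continuousAt.add (hg x hx).continuousAt).continuousWithinAt
  obtain ⟨M, hM⟩ := isCompact_Icc.exists_bound_of_continuousOn hcont
  have hd : ∀ x ∈ Icc 0 b, HasDerivAt (fun x => (f x - g x, f₁ x - g₁ x))
      (f₁ x - g₁ x, 6 * (f x + g x) * (f x - g x)) x := fun x hx => by
    refine ((hf x hx).sub (hg x hx)).prodMk ?_
    convert! (hf₁ x hx).sub (hg₁ x hx) using 1
    ring
  have key := eq_zero_of_abs_deriv_le_mul_abs_self_of_eq_zero_right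
    (f := fun x => (f x - g x, f₁ x - g₁ x)) (a := 0) (b := b) (K := 6 * M + 1)
    (f' := fun x => (f₁ x - g₁ x, 6 * (f x + g x) * (f x - g x)))
    (fun x hx => (hd x hx).continuousAt.continuousWithinAt)
    (fun x hx => (hd x ⟨hx.1, hx.2.le⟩).hasDerivWithinAt) (by simp [h0, h1]) (fun x hx => by
      have hx' : x ∈ Icc 0 b := ⟨hx.1, hx.2.le⟩
      have hM' := hM x hx'
      have hM0 : 0 ≤ M := (norm_nonneg _).trans hM'
      rw [Prod.norm_mk, Prod.norm_mk]
      refine max_le ?_ ?_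
      · have := le_max_right ‖f x - g x‖ ‖f₁ x - g₁ x‖
        nlinarith [norm_nonneg (f₁ x - g₁ x)]
      · have := le_max_left ‖f x - g x‖ ‖f₁ x - g₁ x‖
        rw [norm_mul, norm_mul]
        norm_num
        gcongr
        linarith)
  intro x hx
  have := congrArg Prod.fst (key x hx)
  exact sub_eq_zero.mp this

lemma wp_ode_unique {f f₁ g g₁ : ℝ → ℂ} {b : ℝ} {c : ℂ}
    (hf : ∀ x ∈ Ioo (-b) b, HasDerivAt f (f₁ x) x)
    (hf₁ : ∀ x ∈ Ioo (-b) b, HasDerivAt f₁ (6 * f x ^ 2 - c) x)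
    (hg : ∀ x ∈ Ioo (-b) b, HasDerivAt g (g₁ x) x)
    (hg₁ : ∀ x ∈ Ioo (-b) b, HasDerivAt g₁ (6 * g x ^ 2 - c) x)
    (h0 : f 0 = g 0) (h1 : f₁ 0 = g₁ 0) : ∀ x ∈ Ioo (-b) b, f x = g x := by
  intro x hx
  rcases le_total 0 x with h | h
  · have hs : ∀ y ∈ Icc 0 x, y ∈ Ioo (-b) b := fun y hy =>
      ⟨by linarith [hy.1, hx.2], by linarith [hy.2, hx.2]⟩
    exact wp_ode_unique_right (fun y hy => hf y (hs y hy)) (fun y hy => hf₁ y (hs y hy))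
      (fun y hy => hg y (hs y hy)) (fun y hy => hg₁ y (hs y hy)) h0 h1 x ⟨h, le_rfl⟩
  · have hs : ∀ y ∈ Icc 0 (-x), -y ∈ Ioo (-b) b := fun y hy =>
      ⟨by linarith [hy.2, hx.1], by linarith [hy.1, hx.1]⟩
    have neg : ∀ {u : ℝ → ℂ} {d : ℂ} {y : ℝ}, HasDerivAt u d (-y) →
        HasDerivAt (fun y => u (-y)) (-d) y := fun {u d y} h => by
      simpa using! h.scomp y (hasDerivAt_neg y)
    have := wp_ode_unique_right (f := fun y => f (-y)) (f₁ := fun y => -f₁ (-y))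
      (g := fun y => g (-y)) (g₁ := fun y => -g₁ (-y)) (b := -x) (c := c)
      (fun y hy => neg (hf _ (hs y hy))) (fun y hy => by simpa using! (neg (hf₁ _ (hs y hy))).neg)
      (fun y hy => neg (hg _ (hs y hy))) (fun y hy => by simpa using! (neg (hg₁ _ (hs y hy))).neg)
      (by simpa) (by simpa) (-x) ⟨by linarith, le_rfl⟩
    simpa using this

/-- `℘(x - 1)` for real `x`. -/
noncomputable def wA (x : ℝ) : ℂ := wP (x - 1)

/-- `℘(x - i)` for real `x`. -/
noncomputable def wB (x : ℝ) : ℂ := wP (x - I)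

lemma hasDerivAt_wA {x : ℝ} (hx : x ∈ Ioo (-1 : ℝ) 1) : HasDerivAt wA (wP' (x - 1)) x :=
  ((hasDerivAt_wP (real_sub_one_notMem hx)).comp_sub_const (x : ℂ) 1).comp_ofReal

lemma hasDerivAt_wA' {x : ℝ} (hx : x ∈ Ioo (-1 : ℝ) 1) :
    HasDerivAt (fun x : ℝ => wP' (x - 1)) (6 * wA x ^ 2 - sqL.g₂ / 2) x :=
  ((hasDerivAt_wP' (real_sub_one_notMem hx)).comp_sub_const (x : ℂ) 1).comp_ofReal

lemma hasDerivAt_wB (x : ℝ) : HasDerivAt wB (wP' (x - I)) x :=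
  ((hasDerivAt_wP (real_sub_I_notMem x)).comp_sub_const (x : ℂ) I).comp_ofReal

lemma hasDerivAt_wB' (x : ℝ) :
    HasDerivAt (fun x : ℝ => wP' (x - I)) (6 * wB x ^ 2 - sqL.g₂ / 2) x :=
  ((hasDerivAt_wP' (real_sub_I_notMem x)).comp_sub_const (x : ℂ) I).comp_ofReal

/-- `℘'` vanishes at the half periods. -/
lemma wP'_half {z : ℂ} (h : 2 * z ∈ sqL.lattice) : wP' (-z) = 0 := by
  have h1 : wP' (-z + (⟨2 * z, h⟩ : sqL.lattice)) = wP' (-z) :=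
    sqL.derivWeierstrassP_add_coe (-z) ⟨2 * z, h⟩
  have h2 : wP' (-z) = - wP' z := sqL.derivWeierstrassP_neg z
  have h3 : -z + ((⟨2 * z, h⟩ : sqL.lattice) : ℂ) = z := by
    change -z + 2 * z = z
    ring
  rw [h3, h2] at h1
  rw [h2]
  have : (2 : ℂ) * wP' z = 0 := by linear_combination h1
  simpa using this

lemma wP_neg (z : ℂ) : wP (-z) = wP z := sqL.weierstrassP_neg z

lemma wA_zero : wA 0 = wP 1 := by simp [wA]

lemma wB_zero : wB 0 = -wP 1 := by
  rw [wB]; simp only [Complex.ofReal_zero, zero_sub, wP_neg]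
  simpa using wP_I_mul 1

lemma wP_one_sub_I : wP (1 - I) = 0 := by
  have h1 := wP_I_mul (1 - I)
  have h2 : wP ((1 - I) + (⟨2 * I, two_I_mem⟩ : sqL.lattice)) = wP (1 - I) :=
    sqL.weierstrassP_add_coe _ ⟨2 * I, two_I_mem⟩
  have h3 : (1 - I) + ((⟨2 * I, two_I_mem⟩ : sqL.lattice) : ℂ) = I * (1 - I) := by
    change (1 - I) + 2 * I = _
    linear_combination Complex.I_sq
  rw [h3, h1] at h2
  have : (2 : ℂ) * wP (1 - I) = 0 := by linear_combination -h2
  simpa using this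

/-- The half-period value `℘(1)` is not `0`, since otherwise `℘(x - 1)` and `℘(x - i)` would solve
the same initial value problem, although only the first one has a pole at `x = 1`. -/
lemma wP_one_ne : wP 1 ≠ 0 := by
  intro h
  have hAB : ∀ x ∈ Ioo (-1 : ℝ) 1, wA x = wB x :=
    wp_ode_unique (fun x hx => hasDerivAt_wA hx) (fun x hx => hasDerivAt_wA' hx)
      (fun x _ => hasDerivAt_wB x) (fun x _ => hasDerivAt_wB' x)
      (by rw [wA_zero, wB_zero, h, neg_zero])
      (by
        simp only [Complex.ofReal_zero, zero_sub]
        rw [wP'_half (z := 1) (by simpa using two_mem), wP'_half (z := I) two_I_mem])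
  have h1 : Tendsto (fun x : ℝ => ‖wB x‖) (𝓝[<] 1) (𝓝 ‖wB 1‖) :=
    ((hasDerivAt_wB 1).continuousAt.norm.tendsto).mono_left nhdsWithin_le_nhds
  have h2 : Tendsto (fun x : ℝ => ‖wB x‖) (𝓝[<] 1) atTop := by
    refine norm_wP_tendsto.congr' ?_
    filter_upwards [Ioo_mem_nhdsLT (show (-1 : ℝ) < 1 by norm_num)] with x hx
    rw [← hAB x hx, wA]
  exact not_tendsto_nhds_of_tendsto_atTop h2 _ h1

lemma g₂_eq : sqL.g₂ = 4 * wP 1 ^ 2 := by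
  have h1 : (1 : ℂ) ∉ sqL.lattice := by
    have := real_sub_one_notMem (x := 0) (by norm_num)
    simp only [Complex.ofReal_zero, zero_sub] at this
    exact fun h => this (neg_mem h)
  have h2 := wP'_sq h1
  have h3 : wP' 1 = 0 := by
    have h := wP'_half (z := -1) (by simpa using neg_mem two_mem)
    simpa using h
  rw [h3] at h2
  have h4 : wP 1 * (4 * wP 1 ^ 2 - sqL.g₂) = 0 := by linear_combination -h2
  rcases mul_eq_zero.mp h4 with h | h
  · exact absurd h wP_one_ne
  · linear_combination -h

/-- The real value `e₁ = ℘(1)`. -/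
noncomputable def e₁ : ℝ := (wP 1).re

lemma wP_one : wP 1 = (e₁ : ℂ) := by
  have := wP_conj 1
  rw [map_one] at this
  exact (Complex.conj_eq_iff_re.mp this.symm).symm

/-- The solution `λ² (y² + ε y')(λx) / 2` of `f'' = 6 f² - λ⁴/2`, where `y` is the lemniscatic
function and `ε = ±1`. -/
noncomputable def lemSol (ε lam : ℝ) (x : ℝ) : ℝ :=
  lam ^ 2 / 2 * (lemPhi (lam * x) ^ 2 + ε * lemPhi' (lam * x))

/-- The derivative of `lemSol`. -/
noncomputable def lemSol' (ε lam : ℝ) (x : ℝ) : ℝ :=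
  lam ^ 3 * (lemPhi (lam * x) * lemPhi' (lam * x) + ε * lemPhi (lam * x) ^ 3)

lemma hasDerivAt_lemSol {ε lam x : ℝ} (hx : lam * x ∈ Ioo (-lemK) lemK) :
    HasDerivAt (lemSol ε lam) (lemSol' ε lam x) x := by
  have hl : HasDerivAt (fun x : ℝ => lam * x) lam x := by
    simpa using (hasDerivAt_id x).const_mul lam
  have h1 := (hasDerivAt_lemPhi hx).comp x hl
  have h2 := (hasDerivAt_lemPhi' hx).comp x hl
  have := (((h1.pow 2).add (h2.const_mul ε)).const_mul (lam ^ 2 / 2))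
  convert! this using 1
  simp [lemSol']
  ring

lemma hasDerivAt_lemSol' {ε lam x : ℝ} (hε : ε ^ 2 = 1) (hx : lam * x ∈ Ioo (-lemK) lemK) :
    HasDerivAt (lemSol' ε lam) (6 * lemSol ε lam x ^ 2 - lam ^ 4 / 2) x := by
  have hl : HasDerivAt (fun x : ℝ => lam * x) lam x := by
    simpa using (hasDerivAt_id x).const_mul lam
  have h1 := (hasDerivAt_lemPhi hx).comp x hl
  have h2 := (hasDerivAt_lemPhi' hx).comp x hl
  have := (((h1.mul h2).add ((h1.pow 3).const_mul ε)).const_mul (lam ^ 3))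
  convert! this using 1
  simp [lemSol]
  have h := lemPhi'_sq hx
  generalize lemPhi' (lam * x) = w at *
  generalize lemPhi (lam * x) = y at *
  linear_combination (lam ^ 4 / 2 : ℝ) * h + (3 / 2 * lam ^ 4 * w ^ 2) * hε

/-- If `e₁ = ε λ²/2`, then `℘(x - 1)` and `℘(x - i)` coincide with the real solutions built from
the lemniscatic function. -/
lemma wA_wB_eq {ε lam : ℝ} (hε : ε ^ 2 = 1) (hl : 0 < lam) (he : e₁ = ε * lam ^ 2 / 2) :
    (∀ x : ℝ, x ∈ Ioo (-1 : ℝ) 1 → lam * x ∈ Ioo (-lemK) lemK → wA x = lemSol ε lam x) ∧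
    (∀ x : ℝ, lam * x ∈ Ioo (-lemK) lemK → wB x = lemSol (-ε) lam x) := by
  have hg : sqL.g₂ / 2 = ((lam ^ 4 / 2 : ℝ) : ℂ) := by
    rw [g₂_eq, wP_one, he]
    have : (ε : ℂ) ^ 2 = 1 := by exact_mod_cast hε
    push_cast
    linear_combination (lam ^ 4 / 2 : ℂ) * this
  have hsub : ∀ {b x : ℝ}, b ≤ lemK / lam → x ∈ Ioo (-b) b → lam * x ∈ Ioo (-lemK) lemK := by
    intro b x hb hx
    have h1 : lam * b ≤ lemK := by
      rw [le_div_iff₀ hl] at hb; linarith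
    exact ⟨by nlinarith [hx.1], by nlinarith [hx.2]⟩
  have hS : ∀ {δ x : ℝ}, lam * x ∈ Ioo (-lemK) lemK →
      HasDerivAt (fun x => (lemSol δ lam x : ℂ)) (lemSol' δ lam x : ℂ) x := fun h =>
    (hasDerivAt_lemSol h).ofReal_comp
  have hS' : ∀ {δ x : ℝ}, δ ^ 2 = 1 → lam * x ∈ Ioo (-lemK) lemK →
      HasDerivAt (fun x => (lemSol' δ lam x : ℂ))
        (6 * (lemSol δ lam x : ℂ) ^ 2 - sqL.g₂ / 2) x := fun hδ h => by
    rw [hg]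
    exact_mod_cast (hasDerivAt_lemSol' hδ h).ofReal_comp
  have h0' : ∀ δ : ℝ, lemSol' δ lam 0 = 0 := fun δ => by
    simp [lemSol', lemPhi_zero]
  have h0 : ∀ δ : ℝ, lemSol δ lam 0 = δ * lam ^ 2 / 2 := fun δ => by
    simp [lemSol, lemPhi_zero, lemPhi'_zero]; ring
  constructor
  · intro x hx hx'
    have hb : x ∈ Ioo (-(min 1 (lemK / lam))) (min 1 (lemK / lam)) := by
      rw [mem_Ioo, ← abs_lt, lt_min_iff]
      refine ⟨abs_lt.mpr hx, ?_⟩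
      rw [lt_div_iff₀ hl, mul_comm]
      have := abs_lt.mpr hx'
      rwa [abs_mul, abs_of_pos hl] at this
    refine wp_ode_unique (b := min 1 (lemK / lam)) (f := wA) (g := fun x => (lemSol ε lam x : ℂ))
      (fun y hy => hasDerivAt_wA ?_) (fun y hy => hasDerivAt_wA' ?_)
      (fun y hy => hS (hsub (min_le_right _ _) hy))
      (fun y hy => hS' hε (hsub (min_le_right _ _) hy)) ?_ ?_ x hb
    · exact Ioo_subset_Ioo (neg_le_neg (min_le_left _ _)) (min_le_left _ _) hy
    · exact Ioo_subset_Ioo (neg_le_neg (min_le_left _ _)) (min_le_left _ _) hy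
    · simp only [wA_zero, wP_one, h0, he]
    · simp only [h0', Complex.ofReal_zero, zero_sub]
      exact wP'_half (z := 1) (by simpa using two_mem)
  · intro x hx'
    have hb : x ∈ Ioo (-(lemK / lam)) (lemK / lam) := by
      rw [mem_Ioo, ← abs_lt, lt_div_iff₀ hl, mul_comm]
      have := abs_lt.mpr hx'
      rwa [abs_mul, abs_of_pos hl] at this
    refine wp_ode_unique (b := lemK / lam) (f := wB) (g := fun x => (lemSol (-ε) lam x : ℂ))
      (fun y hy => hasDerivAt_wB y) (fun y hy => hasDerivAt_wB' y)
      (fun y hy => hS (hsub le_rfl hy))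
      (fun y hy => hS' (by simpa using hε) (hsub le_rfl hy)) ?_ ?_ x hb
    · simp only [wB_zero, wP_one, h0, he]; push_cast; ring
    · simp only [h0', Complex.ofReal_zero, zero_sub]
      exact wP'_half (z := I) two_I_mem

lemma tendsto_lemSol_one {lam : ℝ} (hl : 0 < lam) :
    Tendsto (fun x => ‖(lemSol 1 lam x : ℂ)‖) (𝓝[<] (lemK / lam)) atTop := by
  have ht : Tendsto (fun x : ℝ => lam * x) (𝓝[<] (lemK / lam)) (𝓝[<] lemK) := by
    refine tendsto_nhdsWithin_iff.mpr ⟨?_, ?_⟩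
    · have h : Continuous fun x : ℝ => lam * x := by fun_prop
      have := h.tendsto (lemK / lam)
      rw [mul_div_cancel₀ _ hl.ne'] at this
      exact this.mono_left nhdsWithin_le_nhds
    · filter_upwards [self_mem_nhdsWithin] with x hx
      rw [mem_Iio, lt_div_iff₀ hl] at hx
      simpa [mul_comm] using hx
  have h1 : Tendsto (fun x : ℝ => lam ^ 2 / 2 * lemPhi (lam * x) ^ 2) (𝓝[<] (lemK / lam)) atTop :=
    ((tendsto_pow_atTop two_ne_zero).comp (tendsto_lemPhi.comp ht)).const_mul_atTop (by positivity)
  refine tendsto_atTop_mono' _ ?_ h1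
  have : Ioo (-lemK) lemK ∈ 𝓝[<] lemK := Ioo_mem_nhdsLT (by linarith [lemK_pos])
  filter_upwards [ht this] with x hx
  rw [Complex.norm_real]
  refine le_trans ?_ (le_abs_self _)
  rw [lemSol]
  have := lemPhi'_pos hx
  gcongr
  linarith

lemma tendsto_left_of_continuousAt {f : ℝ → ℂ} {a : ℝ} (h : ContinuousAt f a) :
    Tendsto (fun x => ‖f x‖) (𝓝[<] a) (𝓝 ‖f a‖) :=
  h.norm.tendsto.mono_left nhdsWithin_le_nhds

lemma eventually_mul_mem {lam : ℝ} (hl : 0 < lam) :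
    ∀ᶠ x in 𝓝[<] (lemK / lam), lam * x ∈ Ioo (-lemK) lemK := by
  have hK := div_pos lemK_pos hl
  filter_upwards [Ioo_mem_nhdsLT hK] with x hx
  have h1 := hx.1
  have h2 := hx.2
  rw [lt_div_iff₀ hl] at h2
  exact ⟨by nlinarith [lemK_pos], by linarith⟩

lemma e₁_pos : 0 < e₁ := by
  by_contra hneg
  have hne : e₁ ≠ 0 := fun h => wP_one_ne (by rw [wP_one, h, Complex.ofReal_zero])
  have hlt : e₁ < 0 := lt_of_le_of_ne (not_lt.mp hneg) hne
  -- Otherwise `℘(x - i)`, which is regular on the real line, would have a pole.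
  have hl : 0 < √(-2 * e₁) := sqrt_pos.mpr (by linarith)
  have hB := (wA_wB_eq (ε := -1) (by norm_num) hl (by rw [sq_sqrt (by linarith)]; ring)).2
  rw [neg_neg] at hB
  refine not_tendsto_nhds_of_tendsto_atTop ((tendsto_lemSol_one hl).congr' ?_) _
    (tendsto_left_of_continuousAt (hasDerivAt_wB (lemK / √(-2 * e₁))).continuousAt)
  filter_upwards [eventually_mul_mem hl] with x hx
  rw [hB x hx]

/-- The half-period value of `℘` determines the lemniscatic period: comparing the poles of
`℘(x - 1)` and of the lemniscatic function gives `2 e₁ = K²`. -/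
lemma e₁_eq : e₁ = 1 * lemK ^ 2 / 2 := by
  have hl : 0 < √(2 * e₁) := sqrt_pos.mpr (by linarith [e₁_pos])
  have hsq : √(2 * e₁) ^ 2 = 2 * e₁ := sq_sqrt (by linarith [e₁_pos])
  have hA := (wA_wB_eq (ε := 1) (by norm_num) hl (by rw [hsq]; ring)).1
  generalize √(2 * e₁) = lam at *
  have hlam : lam = lemK := by
    rcases lt_trichotomy lam lemK with h | h | h
    · exfalso
      have hm : lam * 1 ∈ Ioo (-lemK) lemK := ⟨by linarith [lemK_pos], by linarith⟩
      have hc : ContinuousAt (fun x => (lemSol 1 lam x : ℂ)) 1 :=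
        (hasDerivAt_lemSol hm).ofReal_comp.continuousAt
      refine not_tendsto_nhds_of_tendsto_atTop (norm_wP_tendsto.congr' ?_) _
        (tendsto_left_of_continuousAt hc)
      filter_upwards [Ioo_mem_nhdsLT (show (0 : ℝ) < 1 by norm_num)] with x hx
      rw [← hA x ⟨by linarith [hx.1], hx.2⟩ ⟨by nlinarith [hx.1, lemK_pos], by nlinarith [hx.2]⟩, wA]
    · exact h
    · exfalso
      have h1 : lemK / lam < 1 := (div_lt_one hl).mpr h
      have h0 : 0 < lemK / lam := div_pos lemK_pos hl
      refine not_tendsto_nhds_of_tendsto_atTop ((tendsto_lemSol_one hl).congr' ?_) _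
        (tendsto_left_of_continuousAt (hasDerivAt_wA (x := lemK / lam)
          ⟨by linarith, h1⟩).continuousAt)
      filter_upwards [eventually_mul_mem hl, Ioo_mem_nhdsLT h0] with x hx hx'
      rw [hA x ⟨by linarith [hx'.1], by linarith [hx'.2]⟩ hx]
  rw [← hlam, hsq]; ring

lemma lemK_mul_mem {x : ℝ} (hx : x ∈ Ioo (-1 : ℝ) 1) : lemK * x ∈ Ioo (-lemK) lemK :=
  ⟨by nlinarith [hx.1, lemK_pos], by nlinarith [hx.2, lemK_pos]⟩

lemma wA_add_wB {x : ℝ} (hx : x ∈ Ioo (-1 : ℝ) 1) :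
    wA x + wB x = lemK ^ 2 * (lemPhi (lemK * x) : ℂ) ^ 2 := by
  obtain ⟨hA, hB⟩ := wA_wB_eq (by norm_num) lemK_pos e₁_eq
  rw [hA x hx (lemK_mul_mem hx), hB x (lemK_mul_mem hx), lemSol, lemSol]
  push_cast
  ring

lemma wA_sub_wB {x : ℝ} (hx : x ∈ Ioo (-1 : ℝ) 1) :
    wA x - wB x = lemK ^ 2 * (lemPhi' (lemK * x) : ℂ) := by
  obtain ⟨hA, hB⟩ := wA_wB_eq (by norm_num) lemK_pos e₁_eq
  rw [hA x hx (lemK_mul_mem hx), hB x (lemK_mul_mem hx), lemSol, lemSol]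
  push_cast
  ring

/-! ### Taylor coefficients at the origin -/

/-- Two sequences of functions, each consisting of successive derivatives of its initial term on an
open interval, agree as soon as the initial terms do. -/
lemma chain_unique {F G : ℕ → ℝ → ℂ}
    (hF : ∀ n, ∀ x ∈ Ioo (-1 : ℝ) 1, HasDerivAt (F n) (F (n + 1) x) x)
    (hG : ∀ n, ∀ x ∈ Ioo (-1 : ℝ) 1, HasDerivAt (G n) (G (n + 1) x) x)
    (h0 : ∀ x ∈ Ioo (-1 : ℝ) 1, F 0 x = G 0 x) (n : ℕ) :
    ∀ x ∈ Ioo (-1 : ℝ) 1, F n x = G n x := by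
  induction n with
  | zero => exact h0
  | succ n ih =>
    intro x hx
    have he : F n =ᶠ[𝓝 x] G n := by
      filter_upwards [isOpen_Ioo.mem_nhds hx] with y hy using ih y hy
    exact (hF n x hx).unique ((hG n x hx).congr_of_eventuallyEq he)

lemma aeval_zero_int (p : Polynomial ℤ) : Polynomial.aeval (0 : ℝ) p = (p.coeff 0 : ℝ) := by
  rw [← Polynomial.coeff_zero_eq_aeval_zero' p, eq_intCast]

open Polynomial in
/-- The `n`-th derivative of `x ↦ q (φ (K x))`, written as a polynomial in `φ (K x)` times, for odd
`n`, the factor `φ' (K x)`. -/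
noncomputable def lemChain (q : ℤ[X]) (n : ℕ) (x : ℝ) : ℝ :=
  lemK ^ n * (if Even n then aeval (lemPhi (lemK * x)) (lemT^[n / 2] q)
    else lemPhi' (lemK * x) * aeval (lemPhi (lemK * x)) (derivative (lemT^[n / 2] q)))

open Polynomial in
lemma hasDerivAt_lemChain (q : ℤ[X]) (n : ℕ) {x : ℝ} (hx : x ∈ Ioo (-1 : ℝ) 1) :
    HasDerivAt (lemChain q n) (lemChain q (n + 1) x) x := by
  have hm := lemK_mul_mem hx
  have hl : HasDerivAt (fun x : ℝ => lemK * x) lemK x := by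
    simpa using (hasDerivAt_id x).const_mul lemK
  have h1 : HasDerivAt (fun x => lemPhi (lemK * x)) (lemPhi' (lemK * x) * lemK) x :=
    (hasDerivAt_lemPhi hm).comp x hl
  have h2 : HasDerivAt (fun x => lemPhi' (lemK * x)) (2 * lemPhi (lemK * x) ^ 3 * lemK) x :=
    (hasDerivAt_lemPhi' hm).comp x hl
  have hp (p : ℤ[X]) : HasDerivAt (fun x => aeval (lemPhi (lemK * x)) p)
      (aeval (lemPhi (lemK * x)) (derivative p) * (lemPhi' (lemK * x) * lemK)) x :=
    HasDerivAt.comp (h₂ := fun y => aeval y p) x (p.hasDerivAt_aeval (lemPhi (lemK * x))) h1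
  rcases Nat.even_or_odd' n with ⟨k, rfl | rfl⟩
  · have e1 : (2 * k) / 2 = k := by omega
    have e2 : (2 * k + 1) / 2 = k := by omega
    have o : ¬ Even (2 * k + 1) := by simp
    unfold lemChain
    simp only [even_two_mul, if_true, e1, e2, o, if_false]
    refine ((hp (lemT^[k] q)).const_mul (lemK ^ (2 * k))).congr_deriv ?_
    ring
  · have e1 : (2 * k + 1 + 1) / 2 = k + 1 := by omega
    have e2 : (2 * k + 1) / 2 = k := by omega
    have o : ¬ Even (2 * k + 1) := by simp
    have o' : Even (2 * k + 1 + 1) := ⟨k + 1, by ring⟩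
    unfold lemChain
    simp only [o', if_true, e1, e2, o, if_false, Function.iterate_succ_apply']
    refine ((h2.mul (hp (derivative (lemT^[k] q)))).const_mul (lemK ^ (2 * k + 1))).congr_deriv ?_
    have := lemPhi'_sq hm
    simp only [lemT, map_add, map_mul, map_pow, aeval_X, map_one, map_ofNat]
    linear_combination (lemK ^ (2 * k + 2)) *
      aeval (lemPhi (lemK * x)) (derivative (derivative (lemT^[k] q))) * this

/-- The meromorphic function `℘(z - 1) + ε ℘(z - i)`. -/
noncomputable def wF (ε : ℂ) (z : ℂ) : ℂ := wP (z - 1) + ε * wP (z - I)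

lemma analyticAt_wF (ε : ℂ) {x : ℝ} (hx : x ∈ Ioo (-1 : ℝ) 1) : AnalyticAt ℂ (wF ε) x := by
  have hA : AnalyticAt ℂ (fun z : ℂ => wP (z - 1)) x :=
    AnalyticAt.fun_comp (sqL.analyticOnNhd_weierstrassP _ (real_sub_one_notMem hx)) (by fun_prop)
  have hB : AnalyticAt ℂ (fun z : ℂ => wP (z - I)) x :=
    AnalyticAt.fun_comp (sqL.analyticOnNhd_weierstrassP _ (real_sub_I_notMem x)) (by fun_prop)
  exact hA.add (analyticAt_const.mul hB)

lemma hasDerivAt_iteratedDeriv_wF (ε : ℂ) (n : ℕ) {x : ℝ} (hx : x ∈ Ioo (-1 : ℝ) 1) :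
    HasDerivAt (fun x : ℝ => iteratedDeriv n (wF ε) x) (iteratedDeriv (n + 1) (wF ε) x) x := by
  have h : AnalyticAt ℂ (iteratedDeriv n (wF ε)) x := by
    rw [iteratedDeriv_eq_iterate]; exact (analyticAt_wF ε hx).iterated_deriv n
  rw [iteratedDeriv_succ]
  exact h.differentiableAt.hasDerivAt.comp_ofReal

/-- The `i`-th Taylor coefficient of `℘` at a point `x`. -/
noncomputable def wCoeff (x : ℂ) (i : ℕ) : ℂ :=
  if i = 0 then wP x else (i + 1) * sqL.sumInvPow x (i + 2)

lemma iteratedDeriv_wP {x : ℂ} (hx : x ∉ sqL.lattice) (n : ℕ) :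
    iteratedDeriv n wP x = n.factorial * wCoeff x n := by
  obtain ⟨r, hr, hr'⟩ := Metric.nhds_basis_closedBall.mem_iff.mp (isOpen_compl_sqL.mem_nhds hx)
  have h1 := sqL.hasFPowerSeriesOnBall_weierstrassP x ⟨r, hr.le⟩ hr hr'
  have h2 := (sqL.analyticOnNhd_weierstrassP x hx).hasFPowerSeriesAt
  have := h1.hasFPowerSeriesAt.eq_formalMultilinearSeries h2
  have := congrArg (fun p => FormalMultilinearSeries.coeff p n) this
  simp only [PeriodPair.weierstrassPSeries, FormalMultilinearSeries.coeff_ofScalars] at this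
  have hn : (n.factorial : ℂ) ≠ 0 := by exact_mod_cast n.factorial_ne_zero
  rw [wCoeff, this, mul_div_cancel₀ _ hn]

lemma iteratedDeriv_wF (ε : ℂ) (n : ℕ) :
    iteratedDeriv n (wF ε) 0 = n.factorial * (wCoeff (-1) n + ε * wCoeff (-I) n) := by
  have m1 : (-1 : ℂ) ∉ sqL.lattice := by
    simpa using real_sub_one_notMem (x := 0) (by simp)
  have m2 : (-I : ℂ) ∉ sqL.lattice := by
    simpa using real_sub_I_notMem 0
  have hA : ContDiffAt ℂ n (fun z : ℂ => wP (z - 1)) 0 := by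
    refine ContDiffAt.comp (g := wP) (f := fun z : ℂ => z - 1) 0 ?_ (by fun_prop)
    exact (sqL.analyticOnNhd_weierstrassP _ (by simpa using m1)).contDiffAt
  have hB : ContDiffAt ℂ n (fun z : ℂ => wP (z - I)) 0 := by
    refine ContDiffAt.comp (g := wP) (f := fun z : ℂ => z - I) 0 ?_ (by fun_prop)
    exact (sqL.analyticOnNhd_weierstrassP _ (by simpa using m2)).contDiffAt
  have : wF ε = (fun z : ℂ => wP (z - 1)) + fun z => ε * wP (z - I) := rfl
  rw [this, iteratedDeriv_add hA (contDiffAt_const.mul hB), iteratedDeriv_const_mul_field,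
    iteratedDeriv_comp_sub_const, iteratedDeriv_comp_sub_const]
  simp only [zero_sub, iteratedDeriv_wP m1, iteratedDeriv_wP m2]
  ring

lemma wF_one {x : ℝ} : wF 1 x = wA x + wB x := by simp [wF, wA, wB]

lemma wF_neg_one {x : ℝ} : wF (-1) x = wA x - wB x := by simp [wF, wA, wB, sub_eq_add_neg]

lemma hasDerivAt_ofReal_lemChain (q : Polynomial ℤ) (n : ℕ) (c : ℂ) {x : ℝ}
    (hx : x ∈ Ioo (-1 : ℝ) 1) :
    HasDerivAt (fun x => c * (lemChain q n x : ℂ)) (c * (lemChain q (n + 1) x : ℂ)) x :=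
  (hasDerivAt_lemChain q n hx).ofReal_comp.const_mul c

/-- The Taylor coefficients of `℘(x - 1) - ℘(x - i) = K² φ'(K x)`. -/
lemma taylor_sub (n : ℕ) :
    (lemK : ℂ) ^ (4 * n + 2) * ((lemT^[2 * n] Polynomial.X).coeff 1 : ℤ) =
      (4 * n).factorial * (wCoeff (-1) (4 * n) - wCoeff (-I) (4 * n)) := by
  have h := chain_unique (F := fun n x => iteratedDeriv n (wF (-1)) x)
    (G := fun n x => (lemK : ℂ) * (lemChain Polynomial.X (n + 1) x : ℂ))
    (fun n x hx => hasDerivAt_iteratedDeriv_wF _ n hx)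
    (fun n x hx => hasDerivAt_ofReal_lemChain _ (n + 1) _ hx)
    (fun x hx => by
      simp only [iteratedDeriv_zero, wF_neg_one, wA_sub_wB hx]
      simp [lemChain]; ring) (4 * n) 0 (by simp)
  have e : (4 * n + 1) / 2 = 2 * n := by omega
  have o : ¬ Even (4 * n + 1) := by rw [Nat.not_even_iff_odd]; exact ⟨2 * n, by ring⟩
  simp only [Complex.ofReal_zero, iteratedDeriv_wF, lemChain, o, if_false, e, mul_zero, lemPhi_zero,
    lemPhi'_zero, one_mul] at h
  rw [aeval_zero_int, Polynomial.coeff_derivative] at h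
  rw [sub_eq_add_neg, neg_eq_neg_one_mul (wCoeff (-I) _), h]
  simp; ring

/-- The Taylor coefficients of `℘(x - 1) + ℘(x - i) = K² φ(K x)²`. -/
lemma taylor_add (n : ℕ) :
    (lemK : ℂ) ^ (4 * n + 4) * ((lemT^[2 * n + 1] (Polynomial.X ^ 2)).coeff 0 : ℤ) =
      (4 * n + 2).factorial * (wCoeff (-1) (4 * n + 2) + wCoeff (-I) (4 * n + 2)) := by
  have h := chain_unique (F := fun n x => iteratedDeriv n (wF 1) x)
    (G := fun n x => (lemK : ℂ) ^ 2 * (lemChain (Polynomial.X ^ 2) n x : ℂ))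
    (fun n x hx => hasDerivAt_iteratedDeriv_wF _ n hx)
    (fun n x hx => hasDerivAt_ofReal_lemChain _ n _ hx)
    (fun x hx => by
      simp only [iteratedDeriv_zero, wF_one, wA_add_wB hx]
      simp [lemChain]) (4 * n + 2) 0 (by simp)
  have e : (4 * n + 2) / 2 = 2 * n + 1 := by omega
  have o : Even (4 * n + 2) := ⟨2 * n + 1, by ring⟩
  simp only [Complex.ofReal_zero, iteratedDeriv_wF, lemChain, o, if_true, e, mul_zero, lemPhi_zero,
    one_mul] at h
  rw [aeval_zero_int] at h
  rw [h]
  simp; ring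

/-! ### Lattice sums over a quadrant -/

/-- The Gaussian integers congruent to `1` modulo `1 + i`. -/
noncomputable def gp (a b : ℤ) : ℂ := 1 + a * (1 + I) + b * (1 - I)

/-- The summand `ε^(a+b) / (1 + a (1 + i) + b (1 - i))^r`. -/
noncomputable def gF (ε : ℂ) (r : ℕ) (x : ℤ × ℤ) : ℂ :=
  ε ^ (x.1 + x.2) * (gp x.1 x.2 ^ r)⁻¹

/-- The sum of `gF` over the quadrant `a, b ≥ 0`. -/
noncomputable def gQ (ε : ℂ) (r : ℕ) : ℂ := ∑' x : ℕ × ℕ, gF ε r (x.1, x.2)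

/-- The two index-two cosets in `ℤ²` given by the parity of `a + b`. -/
noncomputable def parityEquiv : (ℤ × ℤ) ⊕ (ℤ × ℤ) ≃ ℤ × ℤ :=
  Equiv.ofBijective
    (Sum.elim (fun x => (x.1 + x.2, x.1 - x.2)) fun x => (x.1 + x.2, x.1 - x.2 - 1)) (by
    constructor
    · rintro (⟨a, b⟩ | ⟨a, b⟩) (⟨c, d⟩ | ⟨c, d⟩) h <;> simp at h ⊢ <;> omega
    · rintro ⟨a, b⟩
      rcases Int.even_or_odd' (a + b) with ⟨k, hk | hk⟩
      · exact ⟨Sum.inl (k, a - k), by simp; omega⟩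
      · exact ⟨Sum.inr (k + 1, a - k - 1), by simp; omega⟩)

/-- The plane is the disjoint union of four quadrants, permuted by `(a, b) ↦ (b, -1 - a)`. -/
noncomputable def quadrantEquiv : ((ℕ × ℕ) ⊕ (ℕ × ℕ)) ⊕ ((ℕ × ℕ) ⊕ (ℕ × ℕ)) ≃ ℤ × ℤ :=
  Equiv.ofBijective
    (Sum.elim (Sum.elim (fun x => ((x.1 : ℤ), (x.2 : ℤ))) fun x => ((x.2 : ℤ), -1 - (x.1 : ℤ)))
      (Sum.elim (fun x => (-1 - (x.1 : ℤ), -1 - (x.2 : ℤ))) fun x => (-1 - (x.2 : ℤ), (x.1 : ℤ)))) (by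
    constructor
    · rintro ((⟨a, b⟩ | ⟨a, b⟩) | (⟨a, b⟩ | ⟨a, b⟩)) ((⟨c, d⟩ | ⟨c, d⟩) | (⟨c, d⟩ | ⟨c, d⟩)) h <;>
        simp at h ⊢ <;> omega
    · rintro ⟨a, b⟩
      rcases le_or_gt 0 a with ha | ha <;> rcases le_or_gt 0 b with hb | hb
      · exact ⟨Sum.inl (Sum.inl (a.toNat, b.toNat)), by simp; omega⟩
      · exact ⟨Sum.inl (Sum.inr ((-1 - b).toNat, a.toNat)), by simp; omega⟩
      · exact ⟨Sum.inr (Sum.inr (b.toNat, (-1 - a).toNat)), by simp; omega⟩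
      · exact ⟨Sum.inr (Sum.inl ((-1 - a).toNat, (-1 - b).toNat)), by simp; omega⟩)

lemma hasSum_sqL (x : ℂ) {r : ℕ} (hr : 2 < r) :
    HasSum (fun c : ℤ × ℤ => ((2 * c.1 + 2 * c.2 * I - x : ℂ) ^ r)⁻¹) (sqL.sumInvPow x r) := by
  have h := (sqL.latticeEquivProd.symm.toEquiv.hasSum_iff).mpr (sqL.hasSum_sumInvPow x hr)
  convert h using 2 with c
  have : ((sqL.latticeEquivProd.symm c : sqL.lattice) : ℂ) = 2 * c.1 + 2 * c.2 * I := by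
    rw [PeriodPair.latticeEquiv_symm_apply]; simp [sqL]; ring
  simp [this]

lemma zpow_two_mul_of_sq {ε : ℂ} (hε : ε ^ 2 = 1) (n : ℤ) : ε ^ (2 * n) = 1 := by
  rw [zpow_mul]; norm_cast; simp [hε]

lemma hasSum_gF {ε : ℂ} (hε : ε ^ 2 = 1) {r : ℕ} (hr : 2 < r) :
    HasSum (gF ε r) (sqL.sumInvPow (-1) r + ε * sqL.sumInvPow (-I) r) := by
  have h0 : ε ≠ 0 := by rintro rfl; simp at hε
  have hi : ε⁻¹ = ε := by
    rw [inv_eq_iff_eq_inv, eq_comm]; exact inv_eq_of_mul_eq_one_left (by rw [← sq, hε])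
  rw [← parityEquiv.hasSum_iff]
  apply HasSum.sum
  · convert hasSum_sqL (-1) hr using 2 with c
    change gF ε r (c.1 + c.2, c.1 - c.2) = _
    simp only [gF, gp]
    rw [show c.1 + c.2 + (c.1 - c.2) = 2 * c.1 by ring, zpow_two_mul_of_sq hε, one_mul]
    push_cast
    congr 2; ring
  · have h := (hasSum_sqL (-I) hr).mul_left ε
    refine (congrArg (HasSum · _) (funext fun c => ?_)).mpr h
    change gF ε r (c.1 + c.2, c.1 - c.2 - 1) = _
    simp only [gF, gp]
    rw [show c.1 + c.2 + (c.1 - c.2 - 1) = 2 * c.1 + (-1) by ring, zpow_add₀ h0,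
      zpow_two_mul_of_sq hε, one_mul, zpow_neg_one, hi]
    push_cast
    congr 3; ring

lemma gp_rot (a b : ℤ) : gp b (-1 - a) = I * gp a b := by
  simp only [gp]; push_cast; linear_combination (- (a : ℂ) + b) * Complex.I_sq

lemma gF_rot {ε : ℂ} (hε : ε ^ 2 = 1) {r : ℕ} (hr : I ^ r = ε) (a b : ℤ) :
    gF ε r (b, -1 - a) = gF ε r (a, b) := by
  have h0 : ε ≠ 0 := by rintro rfl; simp at hε
  simp only [gF, gp_rot, mul_pow, hr, mul_inv]
  rw [show b + (-1 - a) = (a + b) + 2 * (-a) + (-1) by ring, zpow_add₀ h0, zpow_add₀ h0,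
    zpow_two_mul_of_sq hε, zpow_neg_one]
  have hi : ε⁻¹ * ε⁻¹ = 1 := by rw [← mul_inv, ← sq, hε, inv_one]
  linear_combination ε ^ (a + b) * (gp a b ^ r)⁻¹ * hi

lemma summable_gF {ε : ℂ} (hε : ε ^ 2 = 1) {r : ℕ} (hr : 2 < r) :
    Summable fun x : ℕ × ℕ => gF ε r (x.1, x.2) :=
  (hasSum_gF hε hr).summable.comp_injective (i := fun x : ℕ × ℕ => ((x.1 : ℤ), (x.2 : ℤ)))
    (fun x y h => by simpa [Prod.ext_iff] using h)

/-- Fourfold rotational symmetry reduces the full lattice sum to a single quadrant. -/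
lemma four_mul_gQ {ε : ℂ} (hε : ε ^ 2 = 1) {r : ℕ} (hr : 2 < r) (hi : I ^ r = ε) :
    4 * gQ ε r = sqL.sumInvPow (-1) r + ε * sqL.sumInvPow (-I) r := by
  have hQ : HasSum (fun x : ℕ × ℕ => gF ε r (x.1, x.2)) (gQ ε r) := (summable_gF hε hr).hasSum
  have h : HasSum (gF ε r ∘ quadrantEquiv) ((gQ ε r + gQ ε r) + (gQ ε r + gQ ε r)) := by
    refine HasSum.sum (HasSum.sum ?_ ?_) (HasSum.sum ?_ ?_)
    · exact hQ
    · convert hQ using 2 with x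
      exact gF_rot hε hi _ _
    · convert hQ using 2 with x
      exact (gF_rot hε hi (x.2 : ℤ) (-1 - (x.1 : ℤ)) |>.trans (gF_rot hε hi _ _) :)
    · convert hQ using 2 with x
      have := gF_rot hε hi (-1 - (x.2 : ℤ)) (x.1 : ℤ)
      rw [show (-1 : ℤ) - (-1 - (x.2 : ℤ)) = x.2 by ring] at this
      exact this.symm
  have := (quadrantEquiv.hasSum_iff.mp h).unique (hasSum_gF hε hr)
  rw [← this]; ring

/-! ### The moments as quadrant sums -/

lemma integral_pow_mul_exp (m : ℕ) {c : ℝ} (hc : 0 < c) :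
    ∫ t in Ioi (0 : ℝ), t ^ m * Real.exp (-(c * t)) = m.factorial * (c ^ (m + 1))⁻¹ := by
  have h := Real.integral_rpow_mul_exp_neg_mul_Ioi (a := (m + 1 : ℝ)) (r := c) (by positivity) hc
  rw [Real.Gamma_nat_eq_factorial] at h
  have e : (1 / c) ^ (m + 1 : ℝ) = (c ^ (m + 1))⁻¹ := by
    rw [← Nat.cast_succ, Real.rpow_natCast, one_div, inv_pow]
  rw [e, mul_comm] at h
  rw [← h]
  refine setIntegral_congr_fun measurableSet_Ioi fun t _ => ?_
  simp

lemma integrableOn_pow_mul_exp (m : ℕ) {c : ℝ} (hc : 0 < c) :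
    IntegrableOn (fun t : ℝ => t ^ m * Real.exp (-(c * t))) (Ioi 0) := by
  refine not_imp_comm.mp integral_undef ?_
  rw [integral_pow_mul_exp m hc]
  have := m.factorial_ne_zero
  positivity

lemma norm_pow_mul_cexp (m : ℕ) (c : ℂ) {t : ℝ} (ht : t ∈ Ioi (0 : ℝ)) :
    ‖(t : ℂ) ^ m * Complex.exp (-(c * t))‖ = t ^ m * Real.exp (-(c.re * t)) := by
  simp [Complex.norm_exp, abs_of_pos (mem_Ioi.mp ht)]

lemma integrableOn_pow_mul_cexp (m : ℕ) {c : ℂ} (hc : 0 < c.re) :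
    IntegrableOn (fun t : ℝ => (t : ℂ) ^ m * Complex.exp (-(c * t))) (Ioi 0) := by
  refine (integrableOn_pow_mul_exp m hc).mono' (by fun_prop) ?_
  filter_upwards [ae_restrict_mem measurableSet_Ioi] with t ht
  rw [norm_pow_mul_cexp m c ht]

lemma integral_norm_pow_mul_cexp (m : ℕ) {c : ℂ} (hc : 0 < c.re) :
    ∫ t in Ioi (0 : ℝ), ‖(t : ℂ) ^ m * Complex.exp (-(c * t))‖
      = m.factorial * (c.re ^ (m + 1))⁻¹ := by
  rw [← integral_pow_mul_exp m hc]
  exact setIntegral_congr_fun measurableSet_Ioi fun t ht => norm_pow_mul_cexp m c ht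

lemma integral_pow_mul_cexp (m : ℕ) {c : ℂ} (hc : 0 < c.re) :
    ∫ t in Ioi (0 : ℝ), (t : ℂ) ^ m * Complex.exp (-(c * t)) = m.factorial * (c ^ (m + 1))⁻¹ := by
  have hc0 : c ≠ 0 := by rintro rfl; simp at hc
  induction m with
  | zero =>
    have := integral_exp_mul_complex_Ioi (a := -c) (by simpa using hc) 0
    simpa [neg_mul] using this
  | succ m ih =>
    have hd : ∀ t : ℝ, HasDerivAt (fun t : ℝ => (t : ℂ) ^ (m + 1) * Complex.exp (-(c * t)))
        ((m + 1) * ((t : ℂ) ^ m * Complex.exp (-(c * t))) -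
          c * ((t : ℂ) ^ (m + 1) * Complex.exp (-(c * t)))) t := by
      intro t
      have h1 : HasDerivAt (fun z : ℂ => z ^ (m + 1) * Complex.exp (-(c * z)))
          (((m + 1 : ℕ) : ℂ) * (t : ℂ) ^ m * Complex.exp (-(c * t)) +
            (t : ℂ) ^ (m + 1) * (Complex.exp (-(c * t)) * -(c * 1))) (t : ℂ) :=
        (hasDerivAt_pow (m + 1) (t : ℂ)).mul ((((hasDerivAt_id (t : ℂ)).const_mul c).neg).cexp)
      refine h1.comp_ofReal.congr_deriv ?_
      push_cast; ring
    have i1 := (integrableOn_pow_mul_cexp m hc).const_mul (m + 1 : ℂ)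
    have i2 := (integrableOn_pow_mul_cexp (m + 1) hc).const_mul c
    have lim := tendsto_zero_of_hasDerivAt_of_integrableOn_Ioi (fun t _ => hd t) (i1.sub i2)
      (integrableOn_pow_mul_cexp (m + 1) hc)
    have h := integral_Ioi_of_hasDerivAt_of_tendsto' (fun t _ => hd t) (i1.sub i2) lim
    rw [integral_sub i1 i2, integral_const_mul, integral_const_mul, ih] at h
    simp at h
    rw [sub_eq_zero] at h
    apply mul_left_cancel₀ hc0
    rw [← h, Nat.factorial_succ]
    push_cast
    field_simp
    ring

lemma gp_re (a b : ℤ) : (gp a b).re = 1 + a + b := by simp [gp]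

lemma gp_im (a b : ℤ) : (gp a b).im = a - b := by simp [gp]; ring

lemma norm_gp_le (a b : ℕ) : ‖gp a b‖ ≤ 2 * (1 + a + b) := by
  refine (Complex.norm_le_abs_re_add_abs_im _).trans ?_
  rw [gp_re, gp_im]
  have ha : (0 : ℝ) ≤ a := a.cast_nonneg
  have hb : (0 : ℝ) ≤ b := b.cast_nonneg
  push_cast
  rw [abs_of_nonneg (by positivity)]
  have : |(a : ℝ) - b| ≤ a + b := by rw [abs_le]; constructor <;> linarith
  linarith

lemma norm_of_sq {ε : ℂ} (hε : ε ^ 2 = 1) : ‖ε‖ = 1 := by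
  have : ‖ε‖ ^ 2 = 1 := by rw [← norm_pow, hε, norm_one]
  exact (pow_eq_one_iff_of_nonneg (norm_nonneg _) two_ne_zero).mp this

/-- The double geometric series for `1 / (cosh t - ε cos t)`. -/
lemma hasSum_geom {ε : ℂ} (hε : ε ^ 2 = 1) {t : ℝ} (ht : 0 < t) :
    HasSum (fun x : ℕ × ℕ => ε ^ ((x.1 : ℤ) + x.2) * Complex.exp (-(gp x.1 x.2 * t)))
      (1 / (2 * (Complex.cosh t - ε * Complex.cos t))) := by
  have hn : ∀ c : ℂ, c.re = 1 → ‖ε * Complex.exp (-(c * t))‖ < 1 := by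
    intro c hc
    rw [norm_mul, norm_of_sq hε, one_mul, Complex.norm_exp]
    simp [hc, ht]
  set u := ε * Complex.exp (-((1 + I) * t)) with hu
  set v := ε * Complex.exp (-((1 - I) * t)) with hv
  have hu1 : ‖u‖ < 1 := hn _ (by simp)
  have hv1 : ‖v‖ < 1 := hn _ (by simp)
  have hs := summable_mul_of_summable_norm (f := fun n => u ^ n) (g := fun n => v ^ n) (summable_geometric_of_lt_one (norm_nonneg u) hu1 |>.congr
    fun n => (norm_pow u n).symm) (summable_geometric_of_lt_one (norm_nonneg v) hv1 |>.congr
    fun n => (norm_pow v n).symm)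
  have h := ((hasSum_geometric_of_norm_lt_one hu1).mul (hasSum_geometric_of_norm_lt_one hv1)
    hs).mul_left (Complex.exp (-t))
  have hf : (fun x : ℕ × ℕ => ε ^ ((x.1 : ℤ) + x.2) * Complex.exp (-(gp x.1 x.2 * t))) =
      fun x => Complex.exp (-t) * (u ^ x.1 * v ^ x.2) := by
    ext ⟨a, b⟩
    have h0 : ε ≠ 0 := by rintro rfl; simp at hε
    simp only [hu, hv, mul_pow, ← Complex.exp_nat_mul]
    rw [zpow_add₀ h0, zpow_natCast, zpow_natCast]
    have : Complex.exp (-(gp a b * t)) = Complex.exp (-t) * (Complex.exp (a * -((1 + I) * t)) *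
        Complex.exp (b * -((1 - I) * t))) := by
      rw [← Complex.exp_add, ← Complex.exp_add]
      congr 1; simp only [gp]; push_cast; ring
    rw [this]; ring
  have hval : 1 / (2 * (Complex.cosh t - ε * Complex.cos t)) =
      Complex.exp (-t) * ((1 - u)⁻¹ * (1 - v)⁻¹) := by
    have e1 : 1 - u ≠ 0 := fun h => by
      rw [sub_eq_zero] at h; rw [← h] at hu1; simp at hu1
    have e2 : 1 - v ≠ 0 := fun h => by
      rw [sub_eq_zero] at h; rw [← h] at hv1; simp at hv1
    have key : (1 - u) * (1 - v) = Complex.exp (-t) *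
        (2 * (Complex.cosh t - ε * Complex.cos t)) := by
      have a1 : Complex.exp (-((1 + I) * t)) = Complex.exp (-t) * Complex.exp (-t * I) := by
        rw [← Complex.exp_add]; ring_nf
      have a2 : Complex.exp (-((1 - I) * t)) = Complex.exp (-t) * Complex.exp (t * I) := by
        rw [← Complex.exp_add]; ring_nf
      have a3 : Complex.exp (-t * I) * Complex.exp (t * I) = 1 := by
        rw [← Complex.exp_add]; simp
      have a4 : Complex.exp (-t) * Complex.exp t = 1 := by
        rw [← Complex.exp_add]; simp
      rw [hu, hv, a1, a2, Complex.cosh, Complex.cos]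
      linear_combination ε ^ 2 * Complex.exp (-t) ^ 2 * a3 + Complex.exp (-t) ^ 2 * hε - a4
    have e3 : Complex.cosh t - ε * Complex.cos t ≠ 0 := by
      intro h; rw [h] at key; simp [e1, e2] at key
    have e4 := Complex.exp_ne_zero (-t : ℂ)
    rw [← mul_inv, key]
    field_simp
  rw [hf, hval]
  exact h

/-- The moments `∫₀^∞ t^m / (cosh t - ε cos t) dt`. -/
noncomputable def moment (ε : ℝ) (m : ℕ) : ℝ :=
  ∫ t in Ioi (0 : ℝ), t ^ m / (Real.cosh t - ε * Real.cos t)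

lemma moment_eq {ε : ℝ} (hε : ε ^ 2 = 1) {m : ℕ} (hm : 2 ≤ m) :
    (moment ε m : ℂ) = 2 * m.factorial * gQ ε (m + 1) := by
  have hε' : (ε : ℂ) ^ 2 = 1 := by exact_mod_cast hε
  have hre : ∀ x : ℕ × ℕ, 0 < (gp x.1 x.2).re := by
    intro x; rw [gp_re]; push_cast; positivity
  have h := hasSum_integral_of_summable_integral_norm (μ := volume.restrict (Ioi (0 : ℝ)))
    (F := fun (x : ℕ × ℕ) (t : ℝ) => (ε : ℂ) ^ ((x.1 : ℤ) + x.2) *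
      ((t : ℂ) ^ m * Complex.exp (-(gp x.1 x.2 * t))))
    (fun x => (integrableOn_pow_mul_cexp m (hre x)).const_mul _) (by
      simp only [norm_mul (_ ^ (_ : ℤ)), norm_zpow, norm_of_sq hε', one_zpow, one_mul]
      simp only [integral_norm_pow_mul_cexp m (hre _)]
      refine Summable.mul_left _ ?_
      refine Summable.of_nonneg_of_le (fun x => ?_) (fun x => ?_)
        ((summable_gF hε' (r := m + 1) (by omega)).norm.mul_left (2 ^ (m + 1)))
      · have := hre x; positivity
      · have h1 := norm_gp_le x.1 x.2
        have h2 := hre x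
        have h3 : 0 < ‖gp x.1 x.2‖ := norm_pos_iff.mpr fun h => by simp [h] at h2
        simp only [gF, norm_mul, norm_zpow, norm_of_sq hε', one_zpow, one_mul, norm_inv, norm_pow]
        rw [gp_re] at h2 ⊢
        push_cast at h2 ⊢
        rw [← div_eq_mul_inv, ← div_pow, ← inv_pow]
        refine pow_le_pow_left₀ (by positivity) ?_ _
        rw [inv_eq_one_div, div_le_div_iff₀ h2 h3]
        linarith)
  have h1 : ∀ x : ℕ × ℕ, ∫ t in Ioi (0 : ℝ), (ε : ℂ) ^ ((x.1 : ℤ) + x.2) *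
      ((t : ℂ) ^ m * Complex.exp (-(gp x.1 x.2 * t))) = m.factorial * gF ε (m + 1) (x.1, x.2) := by
    intro x
    rw [integral_const_mul, integral_pow_mul_cexp m (hre x), gF]
    ring
  simp only [h1] at h
  have h2 : (∫ t in Ioi (0 : ℝ), ∑' x : ℕ × ℕ, (ε : ℂ) ^ ((x.1 : ℤ) + x.2) *
      ((t : ℂ) ^ m * Complex.exp (-(gp x.1 x.2 * t)))) = (moment ε m : ℂ) / 2 := by
    rw [moment, ← integral_complex_ofReal, ← integral_div]
    refine setIntegral_congr_fun measurableSet_Ioi fun t ht => ?_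
    have := ((hasSum_geom hε' (mem_Ioi.mp ht)).mul_left ((t : ℂ) ^ m)).tsum_eq
    simp only [mul_left_comm ((t : ℂ) ^ m)] at this
    simp only [this]
    push_cast
    rw [mul_one_div, mul_comm (2 : ℂ), div_div]
  rw [h2] at h
  have h3 := ((summable_gF hε' (r := m + 1) (by omega)).hasSum.mul_left
    (m.factorial : ℂ)).unique h
  rw [gQ]
  linear_combination -2 * h3

/-! ### The moments in terms of Taylor coefficients -/

lemma two_mul_moment_neg_one {n : ℕ} (hn : n ≠ 0) :
    2 * (moment (-1) (4 * n + 1) : ℂ) =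
      (lemK : ℂ) ^ (4 * n + 2) * ((lemT^[2 * n] Polynomial.X).coeff 1 : ℤ) := by
  have hI : I ^ (4 * n + 2) = -1 := by rw [pow_add, pow_mul]; simp
  have hQ := four_mul_gQ (ε := -1) (by norm_num) (r := 4 * n + 2) (by omega) hI
  have hn' : 4 * n ≠ 0 := by omega
  rw [taylor_sub, moment_eq (by norm_num) (by omega), wCoeff, wCoeff, if_neg hn', if_neg hn',
    Nat.factorial_succ]
  push_cast
  linear_combination (4 * n + 1 : ℂ) * (4 * n).factorial * hQ

lemma two_mul_moment_one (n : ℕ) :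
    2 * (moment 1 (4 * n + 3) : ℂ) =
      (lemK : ℂ) ^ (4 * n + 4) * ((lemT^[2 * n + 1] (Polynomial.X ^ 2)).coeff 0 : ℤ) := by
  have hI : I ^ (4 * n + 4) = 1 := by rw [pow_add, pow_mul]; simp
  have hQ := four_mul_gQ (ε := 1) (by norm_num) (r := 4 * n + 4) (by omega) hI
  have hn' : 4 * n + 2 ≠ 0 := by omega
  rw [taylor_add, moment_eq (by norm_num) (by omega), wCoeff, wCoeff, if_neg hn', if_neg hn',
    Nat.factorial_succ]
  push_cast
  linear_combination (4 * n + 3 : ℂ) * (4 * n + 2).factorial * hQ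

/-! ### The first moment

The quadrant sum representing `∫₀^∞ t / (cosh t + cos t) dt` is not absolutely convergent; the
value is found instead from the behaviour at the pole `x = 1` of the generating function of all the
moments. -/

lemma hasSum_cosh_add_cos (y : ℝ) :
    HasSum (fun n : ℕ => 2 * y ^ (4 * n) / (4 * n).factorial) (Real.cosh y + Real.cos y) := by
  have h := (Real.hasSum_cosh y).add (Real.hasSum_cos y)
  have hinj : Function.Injective (fun n : ℕ => 2 * n) := fun a b h => by simpa using h
  rw [← hinj.hasSum_iff] at h
  · convert h using 2 with n
    simp only [Function.comp, pow_mul (-1 : ℝ), neg_one_sq, one_pow]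
    rw [show 2 * (2 * n) = 4 * n by ring]
    ring
  · intro m hm
    have : Odd m := by
      rw [← Nat.not_even_iff_odd]; rintro ⟨k, rfl⟩; exact hm ⟨k, by simp; ring⟩
    simp [this.neg_one_pow]; ring

lemma two_le_cosh_add_cos (t : ℝ) : 2 ≤ Real.cosh t + Real.cos t := by
  have := le_hasSum (hasSum_cosh_add_cos t) 0 (fun n _ => by
    have : 0 ≤ t ^ (4 * n) := Even.pow_nonneg ⟨2 * n, by ring⟩ t
    positivity)
  simpa using this

lemma exp_le_cosh_add_cos (t : ℝ) : Real.exp t ≤ 3 * (Real.cosh t + Real.cos t) := by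
  have h1 := two_le_cosh_add_cos t
  have h2 := Real.neg_one_le_cos t
  have h3 := Real.cosh_eq t
  have h4 := Real.exp_pos (-t)
  linarith

lemma integrableOn_moment (m : ℕ) :
    IntegrableOn (fun t : ℝ => t ^ m / (Real.cosh t + Real.cos t)) (Ioi 0) := by
  have hc : ∀ t : ℝ, Real.cosh t + Real.cos t ≠ 0 := fun t => by
    have := two_le_cosh_add_cos t; positivity
  refine ((integrableOn_pow_mul_exp m one_pos).const_mul 3).mono'
    (Continuous.aestronglyMeasurable (by fun_prop (disch := exact hc _))) ?_
  filter_upwards [ae_restrict_mem measurableSet_Ioi] with t ht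
  have h1 := two_le_cosh_add_cos t
  have h2 := exp_le_cosh_add_cos t
  have ht' : 0 < t := ht
  rw [Real.norm_of_nonneg (by positivity), div_le_iff₀ (by positivity), one_mul, Real.exp_neg]
  have h3 := Real.exp_pos t
  have : t ^ m * Real.exp t ≤ t ^ m * (3 * (Real.cosh t + Real.cos t)) := by gcongr
  calc t ^ m = (t ^ m * Real.exp t) * (Real.exp t)⁻¹ := by field_simp
    _ ≤ (t ^ m * (3 * (Real.cosh t + Real.cos t))) * (Real.exp t)⁻¹ := by gcongr
    _ = _ := by ring

/-- The generating function of the moments `∫₀^∞ t^(4n+1) / (cosh t + cos t) dt`. -/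
noncomputable def genH (x : ℝ) : ℝ :=
  ∫ t in Ioi (0 : ℝ), t * (Real.cosh (t * x) + Real.cos (t * x)) / (Real.cosh t + Real.cos t)

lemma moment_neg_one (m : ℕ) :
    moment (-1) m = ∫ t in Ioi (0 : ℝ), t ^ m / (Real.cosh t + Real.cos t) := by
  simp [moment]

lemma hasSum_genH {x : ℝ}
    (h : Summable fun n : ℕ => 2 * x ^ (4 * n) / (4 * n).factorial * moment (-1) (4 * n + 1)) :
    HasSum (fun n : ℕ => 2 * x ^ (4 * n) / (4 * n).factorial * moment (-1) (4 * n + 1))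
      (genH x) := by
  have hx : ∀ n : ℕ, 0 ≤ x ^ (4 * n) := fun n => Even.pow_nonneg ⟨2 * n, by ring⟩ x
  have hF := hasSum_integral_of_summable_integral_norm (μ := volume.restrict (Ioi (0 : ℝ)))
    (F := fun (n : ℕ) (t : ℝ) => 2 * x ^ (4 * n) / (4 * n).factorial *
      (t ^ (4 * n + 1) / (Real.cosh t + Real.cos t)))
    (fun n => (integrableOn_moment _).const_mul _) (by
      refine h.congr fun n => ?_
      rw [moment_neg_one, ← integral_const_mul]
      refine setIntegral_congr_fun measurableSet_Ioi fun t ht => ?_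
      have h1 := two_le_cosh_add_cos t
      have h2 := hx n
      have ht' : 0 < t := ht
      exact (Real.norm_of_nonneg (by positivity)).symm)
  simp only [integral_const_mul, ← moment_neg_one] at hF
  have hval : genH x = ∫ t in Ioi (0 : ℝ), ∑' n : ℕ, 2 * x ^ (4 * n) / (4 * n).factorial *
      (t ^ (4 * n + 1) / (Real.cosh t + Real.cos t)) := by
    refine setIntegral_congr_fun measurableSet_Ioi fun t _ => ?_
    have := ((hasSum_cosh_add_cos (t * x)).mul_left (t / (Real.cosh t + Real.cos t))).tsum_eq
    rw [mul_div_right_comm, ← this]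
    congr 1; ext n
    rw [mul_pow]; ring
  rw [hval]
  exact hF

/-- Near `x = 1` the generating function has the same singular part as `∫₀^∞ t e^(-t(1-x)) dt`. -/
lemma tendsto_genH : Tendsto (fun x => genH x - 1 / (1 - x) ^ 2) (𝓝[<] 1) (𝓝 0) := by
  have hmem : ∀ᶠ x : ℝ in 𝓝[<] 1, x ∈ Ioo (0 : ℝ) 1 := Ioo_mem_nhdsLT (zero_lt_one' ℝ)
  have hc : ∀ t : ℝ, Real.cosh t + Real.cos t ≠ 0 := fun t => by
    have := two_le_cosh_add_cos t; positivity
  set f : ℝ → ℝ → ℝ := fun x t =>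
    t * (Real.cosh (t * x) + Real.cos (t * x)) / (Real.cosh t + Real.cos t)
      - t ^ 1 * Real.exp (-((1 - x) * t)) with hf
  have hmeas : ∀ x, AEStronglyMeasurable (f x) (volume.restrict (Ioi (0 : ℝ))) := fun x =>
    Continuous.aestronglyMeasurable (by simp only [hf]; fun_prop (disch := exact hc _))
  have hbi := (integrableOn_pow_mul_exp 1 one_pos).const_mul 9
  have hbound : ∀ x ∈ Ioo (0 : ℝ) 1, ∀ᵐ t ∂volume.restrict (Ioi (0 : ℝ)),
      ‖f x t‖ ≤ 9 * (t ^ 1 * Real.exp (-(1 * t))) := by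
    intro x hx
    filter_upwards [ae_restrict_mem measurableSet_Ioi] with t ht
    have ht' : 0 < t := ht
    have h1 := two_le_cosh_add_cos t
    have h2 := exp_le_cosh_add_cos t
    -- the leading exponentials `e^(tx)/2` cancel, leaving a bounded numerator
    have e : f x t = t * ((Real.exp (-(t * x)) / 2 + Real.cos (t * x)
        - Real.exp (t * x - 2 * t) / 2 - Real.exp (-((1 - x) * t)) * Real.cos t) /
          (Real.cosh t + Real.cos t)) := by
      have e1 : Real.exp (-((1 - x) * t)) * Real.exp t = Real.exp (t * x) := by
        rw [← Real.exp_add]; ring_nf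
      have e2 : Real.exp (-((1 - x) * t)) * Real.exp (-t) = Real.exp (t * x - 2 * t) := by
        rw [← Real.exp_add]; ring_nf
      simp only [hf]
      rw [mul_div_assoc, pow_one, ← mul_sub]
      congr 1
      rw [eq_div_iff (hc t), sub_mul, div_mul_cancel₀ _ (hc t), Real.cosh_eq t, Real.cosh_eq (t * x)]
      linear_combination (-1 / 2 : ℝ) * e1 - (1 / 2 : ℝ) * e2
    have b1 : Real.exp (-(t * x)) ≤ 1 := Real.exp_le_one_iff.mpr (by nlinarith [hx.1])
    have b2 : Real.exp (t * x - 2 * t) ≤ 1 := Real.exp_le_one_iff.mpr (by nlinarith [hx.2])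
    have b3 : Real.exp (-((1 - x) * t)) ≤ 1 := Real.exp_le_one_iff.mpr (by nlinarith [hx.2])
    have b4 : |Real.exp (-((1 - x) * t)) * Real.cos t| ≤ 1 := by
      rw [abs_mul, abs_of_pos (Real.exp_pos _)]
      exact mul_le_one₀ b3 (abs_nonneg _) (Real.abs_cos_le_one t)
    have b5 := abs_le.mp b4
    have b6 := Real.exp_pos (-(t * x))
    have b7 := Real.exp_pos (t * x - 2 * t)
    have b8 := Real.neg_one_le_cos (t * x)
    have b9 := Real.cos_le_one (t * x)
    rw [e, norm_mul, norm_div, Real.norm_of_nonneg ht'.le,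
      Real.norm_of_nonneg (by positivity : 0 ≤ Real.cosh t + Real.cos t), pow_one, one_mul,
      mul_left_comm]
    refine mul_le_mul_of_nonneg_left ?_ ht'.le
    rw [div_le_iff₀ (by positivity), Real.exp_neg t]
    have b10 : ‖Real.exp (-(t * x)) / 2 + Real.cos (t * x)
        - Real.exp (t * x - 2 * t) / 2 - Real.exp (-((1 - x) * t)) * Real.cos t‖ ≤ 3 := by
      rw [Real.norm_eq_abs, abs_le]; constructor <;> linarith [b5.1, b5.2]
    refine b10.trans ?_
    have h3 := Real.exp_pos t
    calc (3 : ℝ) = 3 * Real.exp t * (Real.exp t)⁻¹ := by field_simp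
      _ ≤ 3 * (3 * (Real.cosh t + Real.cos t)) * (Real.exp t)⁻¹ := by gcongr
      _ = _ := by ring
  have hlim : Tendsto (fun x => ∫ t in Ioi (0 : ℝ), f x t) (𝓝[<] 1)
      (𝓝 (∫ t in Ioi (0 : ℝ), (0 : ℝ))) := by
    refine tendsto_integral_filter_of_dominated_convergence _ (Eventually.of_forall hmeas)
      (hmem.mono hbound) hbi (Eventually.of_forall fun t => ?_)
    have hcont : Continuous fun x => f x t := by simp only [hf]; fun_prop
    have h1 : f 1 t = 0 := by simp [hf, mul_div_assoc, hc t]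
    have := hcont.tendsto 1
    rw [h1] at this
    exact this.mono_left nhdsWithin_le_nhds
  rw [integral_zero] at hlim
  refine hlim.congr' ?_
  filter_upwards [hmem] with x hx
  have i1 : IntegrableOn (f x) (Ioi 0) := hbi.mono' (hmeas x) (hbound x hx)
  have hx' : 0 < 1 - x := by linarith [hx.2]
  have i2 := integrableOn_pow_mul_exp 1 hx'
  have : genH x = ∫ t in Ioi (0 : ℝ), (f x t + t ^ 1 * Real.exp (-((1 - x) * t))) := by
    simp [genH, hf]
  rw [this, integral_add i1 i2, integral_pow_mul_exp 1 hx']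
  simp

/-! ### Taylor series on the unit interval -/

lemma one_le_norm_add_one (l : sqL.lattice) : 1 ≤ ‖(l : ℂ) - -1‖ := by
  obtain ⟨a, b, h⟩ := mem_sqL.mp l.2
  refine le_trans ?_ (Complex.abs_re_le_norm _)
  have : ((l : ℂ) - -1).re = ((2 * a + 1 : ℤ) : ℝ) := by rw [h]; simp
  rw [this, ← Int.cast_abs]
  have : (1 : ℤ) ≤ |2 * a + 1| := Int.one_le_abs (by omega)
  exact_mod_cast this

lemma one_le_norm_add_I (l : sqL.lattice) : 1 ≤ ‖(l : ℂ) - -I‖ := by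
  obtain ⟨a, b, h⟩ := mem_sqL.mp l.2
  refine le_trans ?_ (Complex.abs_im_le_norm _)
  have : ((l : ℂ) - -I).im = ((2 * b + 1 : ℤ) : ℝ) := by rw [h]; simp
  rw [this, ← Int.cast_abs]
  have : (1 : ℤ) ≤ |2 * b + 1| := Int.one_le_abs (by omega)
  exact_mod_cast this

lemma hasSum_wP {c : ℂ} (hc : ∀ l : sqL.lattice, 1 ≤ ‖(l : ℂ) - c‖) {x : ℝ}
    (hx : x ∈ Ioo (-1 : ℝ) 1) :
    HasSum (fun j => wCoeff c j * (x : ℂ) ^ j) (wP (x + c)) := by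
  have h := sqL.weierstrassPSeries_hasSum (x + c) c (fun l => by
    rw [add_sub_cancel_right, Complex.norm_real]
    exact lt_of_lt_of_le (abs_lt.mpr hx) (hc l))
  simpa only [add_sub_cancel_right, PeriodPair.weierstrassPSeries,
    FormalMultilinearSeries.coeff_ofScalars, wCoeff] using h

lemma wCoeff_sub_eq_zero {j : ℕ} (hj : ¬ 4 ∣ j) : wCoeff (-1) j - wCoeff (-I) j = 0 := by
  have h0 : j ≠ 0 := by rintro rfl; simp at hj
  rw [wCoeff, wCoeff, if_neg h0, if_neg h0, ← mul_sub]
  have h1 := sumInvPow_I_mul (-1) (j + 2)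
  rw [show I * -1 = -I by ring] at h1
  have h2 := sumInvPow_I_mul (-I) (j + 2)
  rw [show I * -I = 1 by simp, h1] at h2
  have h3 := sumInvPow_add (-1) (j + 2) ⟨2, two_mem⟩
  rw [show (-1 : ℂ) + (2 : ℂ) = 1 by norm_num, h2] at h3
  rw [h1]
  obtain ⟨k, hk⟩ : ∃ k, j = 4 * k + 1 ∨ j = 4 * k + 2 ∨ j = 4 * k + 3 := ⟨j / 4, by omega⟩
  have hI : I ^ (4 * k) = 1 := by rw [pow_mul]; simp
  rcases hk with rfl | rfl | rfl
  · rw [show 4 * k + 1 + 2 = 4 * k + 3 by ring] at *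
    rw [pow_add, hI, one_mul, Complex.I_pow_three, ← mul_assoc, ← mul_inv] at h3
    simp at h3
    have : sqL.sumInvPow (-1) (4 * k + 3) = 0 := by linear_combination (-1 / 2 : ℂ) * h3
    simp [this]
  · rw [show 4 * k + 2 + 2 = 4 * (k + 1) by ring]
    have hI : I ^ (4 * (k + 1)) = 1 := by rw [pow_mul]; simp
    simp [hI]
  · rw [show 4 * k + 3 + 2 = 4 * (k + 1) + 1 by ring] at *
    have hI : I ^ (4 * (k + 1)) = 1 := by rw [pow_mul]; simp
    rw [pow_add, hI, one_mul, pow_one, ← mul_assoc, ← mul_inv] at h3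
    simp at h3
    have : sqL.sumInvPow (-1) (4 * (k + 1) + 1) = 0 := by linear_combination (-1 / 2 : ℂ) * h3
    simp [this]

/-- On `(0, 1)` the generating function of the moments differs from `℘(x - 1) - ℘(x - i)` by a
constant, all Taylor coefficients but the constant one being known to agree. -/
lemma genH_eq {x : ℝ} (hx : x ∈ Ioo (0 : ℝ) 1) :
    (genH x : ℂ) = 2 * moment (-1) 1 - lemK ^ 2 + (wA x - wB x) := by
  have hx' : x ∈ Ioo (-1 : ℝ) 1 := ⟨by linarith [hx.1], hx.2⟩
  have h := (hasSum_wP one_le_norm_add_one hx').sub (hasSum_wP one_le_norm_add_I hx')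
  have hinj : Function.Injective (fun n : ℕ => 4 * n) := fun a b h => by simpa using h
  rw [← hinj.hasSum_iff] at h
  swap
  · intro j hj
    rw [← sub_mul, wCoeff_sub_eq_zero (fun ⟨k, hk⟩ => hj ⟨k, hk.symm⟩), zero_mul]
  have h2 := h.update 0 (2 * (moment (-1) 1 : ℂ))
  have hfun : Function.update ((fun j => wCoeff (-1) j * (x : ℂ) ^ j - wCoeff (-I) j * (x : ℂ) ^ j) ∘
      fun n : ℕ => 4 * n) 0 (2 * (moment (-1) 1 : ℂ)) =
      fun n : ℕ => ((2 * x ^ (4 * n) / (4 * n).factorial * moment (-1) (4 * n + 1) : ℝ) : ℂ) := by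
    ext n
    rcases eq_or_ne n 0 with rfl | hn
    · simp
    · rw [Function.update_of_ne hn]
      have h1 := two_mul_moment_neg_one hn
      rw [taylor_sub] at h1
      have hf : ((4 * n).factorial : ℂ) ≠ 0 := by exact_mod_cast (4 * n).factorial_ne_zero
      simp only [Function.comp]
      push_cast
      field_simp
      linear_combination -(x : ℂ) ^ (4 * n) * h1
  rw [hfun] at h2
  have h3 := hasSum_genH (Complex.summable_ofReal.mp h2.summable)
  have h4 := (Complex.hasSum_ofReal.mpr h3).unique h2
  have h5 := taylor_sub 0
  simp at h5
  rw [h4, h5]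
  simp [wA, wB, sub_eq_add_neg]

/-- The first moment. -/
lemma two_mul_moment_neg_one_one : 2 * moment (-1) 1 = lemK ^ 2 := by
  have hmem : ∀ᶠ x : ℝ in 𝓝[<] 1, x ∈ Ioo (0 : ℝ) 1 := Ioo_mem_nhdsLT (zero_lt_one' ℝ)
  have hB : Tendsto wB (𝓝[<] 1) (𝓝 0) := by
    have : wB 1 = 0 := by simpa [wB] using wP_one_sub_I
    have h := (hasDerivAt_wB 1).continuousAt.tendsto
    rw [this] at h
    exact h.mono_left nhdsWithin_le_nhds
  have hA := real_tendsto_pole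
  have hH : Tendsto (fun x => ((genH x - 1 / (1 - x) ^ 2 : ℝ) : ℂ)) (𝓝[<] 1) (𝓝 ((0 : ℝ) : ℂ)) :=
    (Complex.continuous_ofReal.tendsto 0).comp tendsto_genH
  have h := hH.sub (hA.sub hB)
  have hconst : Tendsto (fun _ : ℝ => (2 * moment (-1) 1 - lemK ^ 2 : ℂ)) (𝓝[<] 1)
      (𝓝 (((0 : ℝ) : ℂ) - (0 - 0))) := by
    refine h.congr' ?_
    filter_upwards [hmem] with x hx
    have e : (1 - x : ℂ) ^ 2 = (x - 1) ^ 2 := by ring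
    push_cast
    rw [genH_eq hx, e, wA]
    ring
  have := tendsto_nhds_unique tendsto_const_nhds hconst
  simp only [Complex.ofReal_zero, sub_zero] at this
  have h0 : 2 * moment (-1) 1 - lemK ^ 2 = 0 := by exact_mod_cast this
  linarith

/-! ### Conclusion -/

/-- The substitution `x = (t / c)²`. -/
lemma integral_sqrt_subst (D : ℝ → ℝ) (n : ℕ) {c : ℝ} (hc : 0 < c) :
    c ^ (2 * n + 2) * ∫ x in Ioi (0 : ℝ), x ^ n / D (c * √x) =
      2 * ∫ t in Ioi (0 : ℝ), t ^ (2 * n + 1) / D t := by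
  have h1 := integral_comp_rpow_Ioi (fun x : ℝ => x ^ n / D (c * √x)) (p := 2) two_ne_zero
  have h2 := integral_comp_mul_left_Ioi (fun s : ℝ => s ^ (2 * n + 1) / D s) 0 hc
  rw [mul_zero, smul_eq_mul] at h2
  rw [← h1]
  have h3 : ∀ t ∈ Ioi (0 : ℝ), (|(2 : ℝ)| * t ^ ((2 : ℝ) - 1)) • ((t ^ (2 : ℝ)) ^ n /
      D (c * √(t ^ (2 : ℝ)))) = 2 / c ^ (2 * n + 1) * ((c * t) ^ (2 * n + 1) / D (c * t)) := by
    intro t ht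
    have ht' : 0 < t := ht
    have e1 : t ^ (2 : ℝ) = t ^ 2 := by norm_cast
    have e2 : t ^ ((2 : ℝ) - 1) = t := by norm_num
    rw [e1, e2, Real.sqrt_sq ht'.le, abs_of_pos two_pos, smul_eq_mul, mul_pow]
    field_simp
    ring
  rw [setIntegral_congr_fun measurableSet_Ioi h3, integral_const_mul, h2]
  field_simp
  ring

lemma Iplus_eq (n : ℕ) :
    Iplus (1 / √2) (2 * n) = ((lemT^[2 * n] Polynomial.X).coeff 1 : ℤ) := by
  have hK := lemK_pos
  have h := integral_sqrt_subst (fun t => Real.cosh t + Real.cos t) (2 * n) hK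
  rw [show 2 * (2 * n) + 2 = 4 * n + 2 by ring, show 2 * (2 * n) + 1 = 4 * n + 1 by ring,
    ← moment_neg_one] at h
  have hm : 2 * moment (-1) (4 * n + 1) =
      lemK ^ (4 * n + 2) * ((lemT^[2 * n] Polynomial.X).coeff 1 : ℤ) := by
    rcases eq_or_ne n 0 with rfl | hn
    · simpa using two_mul_moment_neg_one_one
    · exact_mod_cast two_mul_moment_neg_one hn
  rw [hm] at h
  have h' := mul_left_cancel₀ (by positivity) h
  simp only [Iplus, ellipticK_compl, add_comm (Real.cos _), even_two_mul, Even.neg_pow, one_pow]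
  rw [h']
  ring

lemma Iminus_eq (n : ℕ) :
    Iminus (1 / √2) (2 * n) = (-2 * (lemT^[2 * n + 1] (Polynomial.X ^ 2)).coeff 0 : ℤ) := by
  have hK := lemK_pos
  have h := integral_sqrt_subst (fun t => Real.cosh t - Real.cos t) (2 * n + 1) hK
  have hmo : moment 1 (4 * n + 3) =
      ∫ t in Ioi (0 : ℝ), t ^ (4 * n + 3) / (Real.cosh t - Real.cos t) := by simp [moment]
  rw [show 2 * (2 * n + 1) + 2 = 4 * n + 4 by ring, show 2 * (2 * n + 1) + 1 = 4 * n + 3 by ring,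
    ← hmo] at h
  have hm : 2 * moment 1 (4 * n + 3) =
      lemK ^ (4 * n + 4) * ((lemT^[2 * n + 1] (Polynomial.X ^ 2)).coeff 0 : ℤ) := by
    exact_mod_cast two_mul_moment_one n
  rw [hm] at h
  have h' := mul_left_cancel₀ (by positivity) h
  have hneg : ∀ x : ℝ, x ^ (2 * n + 1) / (Real.cos (lemK * √x) - Real.cosh (lemK * √x)) =
      -(x ^ (2 * n + 1) / (Real.cosh (lemK * √x) - Real.cos (lemK * √x))) := fun x => by
    rw [← neg_sub, div_neg]
  have ho : (-1 : ℝ) ^ (2 * n + 1) = -1 := Odd.neg_one_pow ⟨n, rfl⟩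
  simp only [Iminus, ellipticK_compl, hneg, integral_neg, ho]
  rw [h']
  push_cast
  ring

theorem lemniscatic_mod_ten (n : ℕ) :
    (∃ a : ℤ, Iplus (1 / Real.sqrt 2) (2 * n) = (a : ℝ) ∧ a ≡ 2 ^ n [ZMOD 10]) ∧
    (∃ b : ℤ, Iminus (1 / Real.sqrt 2) (2 * n) = (b : ℝ) ∧ b ≡ 6 * 2 ^ n [ZMOD 10]) := by
  exact ⟨⟨_, Iplus_eq n, coeff_one_lemT n⟩, ⟨_, Iminus_eq n, coeff_zero_lemT n⟩⟩
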